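/- arXiv:2312.05240 — 7 statements merged into one kernel-verified Lean document; each statement's English description precedes it below -/
import Mathlib

section
/- For every prime p, the group ring F_{p²}[P] over the finite field with p² elements contains a unit that is not a trivial unit; moreover, if p = 2 or p ≡ 1 (mod 8), then the group ring F_p[P] over the field with p elements contains a unit that is not a trivial unit. -/
noncomputable section

/-- The two relators of the Promislow group `P = ⟨a, b | b⁻¹a²b = a⁻², a⁻¹b²a = b⁻²⟩`,
written as words that equal the identity: `b⁻¹a²ba²` and `a⁻¹b²ab²`. -/
def Prels : Set (FreeGroup (Fin 2)) :=
  {(FreeGroup.of 1)⁻¹ * (FreeGroup.of 0) ^ 2 * (FreeGroup.of 1) * (FreeGroup.of 0) ^ 2,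
   (FreeGroup.of 0)⁻¹ * (FreeGroup.of 1) ^ 2 * (FreeGroup.of 0) * (FreeGroup.of 1) ^ 2}

/-- The Promislow group. -/
abbrev P : Type := PresentedGroup Prels

def pa : P := PresentedGroup.of 0
def pb : P := PresentedGroup.of 1
def px : P := pa ^ 2
def py : P := pb ^ 2
def pz : P := (pa * pb) ^ 2

section
section
variable {A : Type*} [Ring A]
def fp (X _Xi Y _Yi _Z Zi h _hb : A) : A := (1+X)*(1+Y)*(1+Zi)*h
def fq (X Xi _Y Yi Z _Zi h _hb : A) : A := ((1+X)*(1+Xi*Yi)+(1+Yi)*(1+Z))*h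
def fr (X _Xi Y Yi Z _Zi h _hb : A) : A := ((1+Yi)*(1+X*Y)*Z+(1+X)*(1+Z))*h
def fs (X Xi Y Yi _Z Zi h _hb : A) : A := Zi*Zi+(4+X+Xi+Y+Yi)*Zi*h
def gp (X Xi Y Yi Z Zi h hb : A) : A := Xi * fp X Xi Yi Y Zi Z hb h
def gq (X Xi Y Yi Z Zi h hb : A) : A := -(Xi * fq X Xi Y Yi Z Zi h hb)
def gr (X Xi Y Yi Z Zi h hb : A) : A := -(Yi * fr X Xi Y Yi Z Zi h hb)
def gs (X Xi Y Yi Z Zi h hb : A) : A := Zi * fs X Xi Yi Y Zi Z hb h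
end
variable {A : Type*} [CommRing A]
variable (X Xi Y Yi Z Zi h hb : A) (hX : X*Xi=1) (hY : Y*Yi=1) (hZ : Z*Zi=1) 
 (K : Z*h+Zi*hb+h*hb*(1-Z)*(1-Zi)=0)
include hX hY hZ K
theorem uv1 : fp X Xi Y Yi Z Zi h hb * gp X Xi Y Yi Z Zi h hb
  + fq X Xi Y Yi Z Zi h hb * gq X Xi Yi Y Zi Z hb h * X
  + fr X Xi Y Yi Z Zi h hb * gr Xi X Y Yi Zi Z hb h * Y
  + fs X Xi Y Yi Z Zi h hb * gs Xi X Yi Y Z Zi h hb * Z = 1 := by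
  unfold gp gq gr gs fp fq fr fs
  grind
theorem uva : fp X Xi Y Yi Z Zi h hb * gq X Xi Y Yi Z Zi h hb
  + fq X Xi Y Yi Z Zi h hb * gp X Xi Yi Y Zi Z hb h 
  + fr X Xi Y Yi Z Zi h hb * gs Xi X Y Yi Zi Z hb h * (Xi * Zi)
  + fs X Xi Y Yi Z Zi h hb * gr Xi X Yi Y Z Zi h hb * Yi = 0 := by
  unfold gp gq gr gs fp fq fr fs
  grind
theorem uvb : fp X Xi Y Yi Z Zi h hb * gr X Xi Y Yi Z Zi h hb
  + fq X Xi Y Yi Z Zi h hb * gs X Xi Yi Y Zi Z hb h * X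
  + fr X Xi Y Yi Z Zi h hb * gp Xi X Y Yi Zi Z hb h
  + fs X Xi Y Yi Z Zi h hb * gq Xi X Yi Y Z Zi h hb * (Yi * Z) = 0 := by
  unfold gp gq gr gs fp fq fr fs
  grind
theorem uvc : fp X Xi Y Yi Z Zi h hb * gs X Xi Y Yi Z Zi h hb
  + fq X Xi Y Yi Z Zi h hb * gr X Xi Yi Y Zi Z hb h
  + fr X Xi Y Yi Z Zi h hb * gq Xi X Y Yi Zi Z hb h * (Xi * Y * Zi)
  + fs X Xi Y Yi Z Zi h hb * gp Xi X Yi Y Z Zi h hb = 0 := by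
  unfold gp gq gr gs fp fq fr fs
  grind
theorem vu1 : gp X Xi Y Yi Z Zi h hb * fp X Xi Y Yi Z Zi h hb
  + gq X Xi Y Yi Z Zi h hb * fq X Xi Yi Y Zi Z hb h * X
  + gr X Xi Y Yi Z Zi h hb * fr Xi X Y Yi Zi Z hb h * Y
  + gs X Xi Y Yi Z Zi h hb * fs Xi X Yi Y Z Zi h hb * Z = 1 := by
  unfold gp gq gr gs fp fq fr fs
  grind
theorem vua : gp X Xi Y Yi Z Zi h hb * fq X Xi Y Yi Z Zi h hb
  + gq X Xi Y Yi Z Zi h hb * fp X Xi Yi Y Zi Z hb h 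
  + gr X Xi Y Yi Z Zi h hb * fs Xi X Y Yi Zi Z hb h * (Xi * Zi)
  + gs X Xi Y Yi Z Zi h hb * fr Xi X Yi Y Z Zi h hb * Yi = 0 := by
  unfold gp gq gr gs fp fq fr fs
  grind
theorem vub : gp X Xi Y Yi Z Zi h hb * fr X Xi Y Yi Z Zi h hb
  + gq X Xi Y Yi Z Zi h hb * fs X Xi Yi Y Zi Z hb h * X
  + gr X Xi Y Yi Z Zi h hb * fp Xi X Y Yi Zi Z hb h
  + gs X Xi Y Yi Z Zi h hb * fq Xi X Yi Y Z Zi h hb * (Yi * Z) = 0 := by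
  unfold gp gq gr gs fp fq fr fs
  grind
theorem vuc : gp X Xi Y Yi Z Zi h hb * fs X Xi Y Yi Z Zi h hb
  + gq X Xi Y Yi Z Zi h hb * fr X Xi Yi Y Zi Z hb h
  + gr X Xi Y Yi Z Zi h hb * fq Xi X Y Yi Zi Z hb h * (Xi * Y * Zi)
  + gs X Xi Y Yi Z Zi h hb * fp Xi X Yi Y Z Zi h hb = 0 := by
  unfold gp gq gr gs fp fq fr fs
  grind
end


theorem crossed_mul {R : Type*} [Ring R] {a b x xi y yi z zi : R}
    (aa : a * a = x) (bb : b * b = y) (cc : a * b * (a * b) = z)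
    (ac : a * (a * b) = x * b) (ba : b * a = xi * y * zi * (a * b))
    (bc : b * (a * b) = xi * zi * a) (ca : a * b * a = yi * z * b) (cb : a * b * b = yi * a)
    {p q r s p' q' r' s' pa qa ra sa pb qb rb sb pc qc rc sc : R}
    (hpa : SemiconjBy a p' pa) (hqa : SemiconjBy a q' qa) (hra : SemiconjBy a r' ra)
    (hsa : SemiconjBy a s' sa)
    (hpb : SemiconjBy b p' pb) (hqb : SemiconjBy b q' qb) (hrb : SemiconjBy b r' rb)
    (hsb : SemiconjBy b s' sb)
    (hpc : SemiconjBy a pb pc) (hqc : SemiconjBy a qb qc) (hrc : SemiconjBy a rb rc)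
    (hsc : SemiconjBy a sb sc) :
    (p + q * a + r * b + s * (a * b)) * (p' + q' * a + r' * b + s' * (a * b)) =
      (p * p' + q * qa * x + r * rb * y + s * sc * z)
      + (p * q' + q * pa + r * sb * (xi * zi) + s * rc * yi) * a
      + (p * r' + q * sa * x + r * pb + s * qc * (yi * z)) * b
      + (p * s' + q * ra + r * qb * (xi * y * zi) + s * pc) * (a * b) := by
  have gen : ∀ g f f' c l e : R, SemiconjBy g f f' → ∀ e' : R, g * e = e' →
      c * g * (f * e) = c * f' * e' := by
    intro g f f' c l e h e' he
    have h1 : g * f = f' * g := h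
    calc c * g * (f * e) = c * (g * f) * e := by noncomm_ring
      _ = c * f' * (g * e) := by rw [h1]; noncomm_ring
      _ = _ := by rw [he]
  have gen1 : ∀ g f f' c : R, SemiconjBy g f f' → c * g * f = c * f' * g := by
    intro g f f' c h
    have h1 : g * f = f' * g := h
    rw [mul_assoc, h1, mul_assoc]
  have hpc' := hpc.mul_left hpb
  have hqc' := hqc.mul_left hqb
  have hrc' := hrc.mul_left hrb
  have hsc' := hsc.mul_left hsb
  have t1 := gen1 a p' pa q hpa
  have t2 := gen1 b p' pb r hpb
  have t3 := gen1 (a * b) p' pc s hpc'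
  have t4 := gen a q' qa q 0 a hqa _ aa
  have t5 := gen b q' qb r 0 a hqb _ ba
  have t6 := gen (a * b) q' qc s 0 a hqc' _ ca
  have t7 := gen a r' ra q 0 b hra _ rfl
  have t8 := gen b r' rb r 0 b hrb _ bb
  have t9 := gen (a * b) r' rc s 0 b hrc' _ cb
  have t10 := gen a s' sa q 0 (a * b) hsa _ ac
  have t11 := gen b s' sb r 0 (a * b) hsb _ bc
  have t12 := gen (a * b) s' sc s 0 (a * b) hsc' _ cc
  simp only [add_mul, mul_add]
  rw [t1, t2, t3, t4, t5, t6, t7, t8, t9, t10, t11, t12]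
  simp only [mul_assoc]
  abel

section
variable {R : Type*} [Ring R] {a X Xi Y Yi Z Zi h hb X' Xi' Y' Yi' Z' Zi' h' hb' : R}
  (hX : SemiconjBy a X X') (hXi : SemiconjBy a Xi Xi') (hY : SemiconjBy a Y Y')
  (hYi : SemiconjBy a Yi Yi') (hZ : SemiconjBy a Z Z') (hZi : SemiconjBy a Zi Zi')
  (hh : SemiconjBy a h h') (hhb : SemiconjBy a hb hb')
include hX hXi hY hYi hZ hZi hh hhb

theorem semi_fp : SemiconjBy a (fp X Xi Y Yi Z Zi h hb) (fp X' Xi' Y' Yi' Z' Zi' h' hb') := by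
  have o := SemiconjBy.one_right a
  exact (((o.add_right hX).mul_right (o.add_right hY)).mul_right (o.add_right hZi)).mul_right hh

theorem semi_fq : SemiconjBy a (fq X Xi Y Yi Z Zi h hb) (fq X' Xi' Y' Yi' Z' Zi' h' hb') := by
  have o := SemiconjBy.one_right a
  exact (((o.add_right hX).mul_right (o.add_right (hXi.mul_right hYi))).add_right
    ((o.add_right hYi).mul_right (o.add_right hZ))).mul_right hh

theorem semi_fr : SemiconjBy a (fr X Xi Y Yi Z Zi h hb) (fr X' Xi' Y' Yi' Z' Zi' h' hb') := by
  have o := SemiconjBy.one_right a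
  exact ((((o.add_right hYi).mul_right (o.add_right (hX.mul_right hY))).mul_right hZ).add_right
    ((o.add_right hX).mul_right (o.add_right hZ))).mul_right hh

theorem semi_fs : SemiconjBy a (fs X Xi Y Yi Z Zi h hb) (fs X' Xi' Y' Yi' Z' Zi' h' hb') := by
  have o : SemiconjBy a (4 : R) 4 := Commute.ofNat_right a 4
  exact (hZi.mul_right hZi).add_right
    ((((((o.add_right hX).add_right hXi).add_right hY).add_right hYi).mul_right hZi).mul_right hh)

theorem semi_gp : SemiconjBy a (gp X Xi Y Yi Z Zi h hb) (gp X' Xi' Y' Yi' Z' Zi' h' hb') :=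
  hXi.mul_right (semi_fp hX hXi hYi hY hZi hZ hhb hh)

theorem semi_gq : SemiconjBy a (gq X Xi Y Yi Z Zi h hb) (gq X' Xi' Y' Yi' Z' Zi' h' hb') :=
  (hXi.mul_right (semi_fq hX hXi hY hYi hZ hZi hh hhb)).neg_right

theorem semi_gr : SemiconjBy a (gr X Xi Y Yi Z Zi h hb) (gr X' Xi' Y' Yi' Z' Zi' h' hb') :=
  (hYi.mul_right (semi_fr hX hXi hY hYi hZ hZi hh hhb)).neg_right

theorem semi_gs : SemiconjBy a (gs X Xi Y Yi Z Zi h hb) (gs X' Xi' Y' Yi' Z' Zi' h' hb') :=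
  hZi.mul_right (semi_fs hX hXi hYi hY hZi hZ hhb hh)
end

/-- The characteristic `d` identity. -/
theorem char_identity {A : Type*} [CommRing A] (d : ℕ) [Fact d.Prime] [CharP A d] (Z Zi : A)
    (hZ : Z * Zi = 1) :
    Z * (1 - Z) ^ (d - 2) + Zi * (1 - Zi) ^ (d - 2)
      + (1 - Z) ^ (d - 2) * (1 - Zi) ^ (d - 2) * (1 - Z) * (1 - Zi) = 0 := by
  obtain ⟨n, hn⟩ : ∃ n, d = n + 2 := ⟨d - 2, by have := (Fact.out : d.Prime).two_le; omega⟩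
  have hd : d - 2 = n := by omega
  rw [hd]
  have e1 : (1 - Z) ^ (n + 2) = 1 - Z ^ (n + 2) := by
    have := sub_pow_char (p := d) (1 : A) Z
    rw [hn] at this; simpa using this
  have e2 : (-1 : A) ^ n = -1 := by
    have := neg_one_pow_char A d
    rw [hn, pow_add] at this; simpa using this
  have e3 : (1 - Zi) ^ n = - Zi ^ n * (1 - Z) ^ n := by
    have : 1 - Zi = (-1) * Zi * (1 - Z) := by linear_combination (-1 : A) * hZ
    rw [this, mul_pow, mul_pow, e2]; ring
  have e4 : Z ^ n * Zi ^ n = 1 := by rw [← mul_pow, hZ, one_pow]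
  rw [e3]
  clear e3 e2
  have e5 : (1 - Z) ^ n * ((1 - Z) * (1 - Z)) = 1 - Z ^ n * (Z * Z) := by
    rw [← sub_eq_zero]; rw [← sub_eq_zero] at e1; rw [← e1]; ring
  clear e1
  generalize (1 - Z) ^ n = h at *
  generalize Z ^ n = W at *
  generalize Zi ^ n = V at *
  grind

theorem unit_abstract {A R : Type*} [CommRing A] [Ring R] (φ : A →+* R) {a b : R}
    {X Xi Y Yi Z Zi h hb : A} (hX : X * Xi = 1) (hY : Y * Yi = 1) (hZ : Z * Zi = 1)
    (K : Z * h + Zi * hb + h * hb * (1 - Z) * (1 - Zi) = 0)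
    (aa : a * a = φ X) (bb : b * b = φ Y) (cc : a * b * (a * b) = φ Z)
    (ac : a * (a * b) = φ X * b) (ba : b * a = φ Xi * φ Y * φ Zi * (a * b))
    (bc : b * (a * b) = φ Xi * φ Zi * a) (ca : a * b * a = φ Yi * φ Z * b)
    (cb : a * b * b = φ Yi * a)
    (aX : SemiconjBy a (φ X) (φ X)) (aXi : SemiconjBy a (φ Xi) (φ Xi))
    (aY : SemiconjBy a (φ Y) (φ Yi)) (aYi : SemiconjBy a (φ Yi) (φ Y))
    (aZ : SemiconjBy a (φ Z) (φ Zi)) (aZi : SemiconjBy a (φ Zi) (φ Z))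
    (ah : SemiconjBy a (φ h) (φ hb)) (ahb : SemiconjBy a (φ hb) (φ h))
    (bX : SemiconjBy b (φ X) (φ Xi)) (bXi : SemiconjBy b (φ Xi) (φ X))
    (bY : SemiconjBy b (φ Y) (φ Y)) (bYi : SemiconjBy b (φ Yi) (φ Yi))
    (bZ : SemiconjBy b (φ Z) (φ Zi)) (bZi : SemiconjBy b (φ Zi) (φ Z))
    (bh : SemiconjBy b (φ h) (φ hb)) (bhb : SemiconjBy b (φ hb) (φ h)) :
    ∃ u : Rˣ, (u : R) = fp (φ X) (φ Xi) (φ Y) (φ Yi) (φ Z) (φ Zi) (φ h) (φ hb)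
      + fq (φ X) (φ Xi) (φ Y) (φ Yi) (φ Z) (φ Zi) (φ h) (φ hb) * a
      + fr (φ X) (φ Xi) (φ Y) (φ Yi) (φ Z) (φ Zi) (φ h) (φ hb) * b
      + fs (φ X) (φ Xi) (φ Y) (φ Yi) (φ Z) (φ Zi) (φ h) (φ hb) * (a * b) := by
  have mfp : ∀ X Xi Y Yi Z Zi h hb : A, φ (fp X Xi Y Yi Z Zi h hb) =
      fp (φ X) (φ Xi) (φ Y) (φ Yi) (φ Z) (φ Zi) (φ h) (φ hb) := by intros; simp [fp]
  have mfq : ∀ X Xi Y Yi Z Zi h hb : A, φ (fq X Xi Y Yi Z Zi h hb) =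
      fq (φ X) (φ Xi) (φ Y) (φ Yi) (φ Z) (φ Zi) (φ h) (φ hb) := by intros; simp [fq]
  have mfr : ∀ X Xi Y Yi Z Zi h hb : A, φ (fr X Xi Y Yi Z Zi h hb) =
      fr (φ X) (φ Xi) (φ Y) (φ Yi) (φ Z) (φ Zi) (φ h) (φ hb) := by intros; simp [fr]
  have mfs : ∀ X Xi Y Yi Z Zi h hb : A, φ (fs X Xi Y Yi Z Zi h hb) =
      fs (φ X) (φ Xi) (φ Y) (φ Yi) (φ Z) (φ Zi) (φ h) (φ hb) := by intros; simp [fs, map_ofNat]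
  have mgp : ∀ X Xi Y Yi Z Zi h hb : A, φ (gp X Xi Y Yi Z Zi h hb) =
      gp (φ X) (φ Xi) (φ Y) (φ Yi) (φ Z) (φ Zi) (φ h) (φ hb) := by intros; simp [gp, mfp]
  have mgq : ∀ X Xi Y Yi Z Zi h hb : A, φ (gq X Xi Y Yi Z Zi h hb) =
      gq (φ X) (φ Xi) (φ Y) (φ Yi) (φ Z) (φ Zi) (φ h) (φ hb) := by intros; simp [gq, mfq]
  have mgr : ∀ X Xi Y Yi Z Zi h hb : A, φ (gr X Xi Y Yi Z Zi h hb) =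
      gr (φ X) (φ Xi) (φ Y) (φ Yi) (φ Z) (φ Zi) (φ h) (φ hb) := by intros; simp [gr, mfr]
  have mgs : ∀ X Xi Y Yi Z Zi h hb : A, φ (gs X Xi Y Yi Z Zi h hb) =
      gs (φ X) (φ Xi) (φ Y) (φ Yi) (φ Z) (φ Zi) (φ h) (φ hb) := by intros; simp [gs, mfs]
  have m1 := congrArg φ (uv1 X Xi Y Yi Z Zi h hb hX hY hZ K)
  have m2 := congrArg φ (uva X Xi Y Yi Z Zi h hb hX hY hZ K)
  have m3 := congrArg φ (uvb X Xi Y Yi Z Zi h hb hX hY hZ K)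
  have m4 := congrArg φ (uvc X Xi Y Yi Z Zi h hb hX hY hZ K)
  have n1 := congrArg φ (vu1 X Xi Y Yi Z Zi h hb hX hY hZ K)
  have n2 := congrArg φ (vua X Xi Y Yi Z Zi h hb hX hY hZ K)
  have n3 := congrArg φ (vub X Xi Y Yi Z Zi h hb hX hY hZ K)
  have n4 := congrArg φ (vuc X Xi Y Yi Z Zi h hb hX hY hZ K)
  simp only [map_add, map_mul, map_one, map_zero, mfp, mfq, mfr, mfs, mgp, mgq, mgr, mgs]
    at m1 m2 m3 m4 n1 n2 n3 n4
  refine ⟨⟨_, gp (φ X) (φ Xi) (φ Y) (φ Yi) (φ Z) (φ Zi) (φ h) (φ hb)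
      + gq (φ X) (φ Xi) (φ Y) (φ Yi) (φ Z) (φ Zi) (φ h) (φ hb) * a
      + gr (φ X) (φ Xi) (φ Y) (φ Yi) (φ Z) (φ Zi) (φ h) (φ hb) * b
      + gs (φ X) (φ Xi) (φ Y) (φ Yi) (φ Z) (φ Zi) (φ h) (φ hb) * (a * b), ?_, ?_⟩, rfl⟩
  · rw [crossed_mul aa bb cc ac ba bc ca cb
      (semi_gp aX aXi aY aYi aZ aZi ah ahb) (semi_gq aX aXi aY aYi aZ aZi ah ahb)
      (semi_gr aX aXi aY aYi aZ aZi ah ahb) (semi_gs aX aXi aY aYi aZ aZi ah ahb)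
      (semi_gp bX bXi bY bYi bZ bZi bh bhb) (semi_gq bX bXi bY bYi bZ bZi bh bhb)
      (semi_gr bX bXi bY bYi bZ bZi bh bhb) (semi_gs bX bXi bY bYi bZ bZi bh bhb)
      (semi_gp aXi aX aY aYi aZi aZ ahb ah) (semi_gq aXi aX aY aYi aZi aZ ahb ah)
      (semi_gr aXi aX aY aYi aZi aZ ahb ah) (semi_gs aXi aX aY aYi aZi aZ ahb ah),
      m1, m2, m3, m4]
    simp
  · rw [crossed_mul aa bb cc ac ba bc ca cb
      (semi_fp aX aXi aY aYi aZ aZi ah ahb) (semi_fq aX aXi aY aYi aZ aZi ah ahb)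
      (semi_fr aX aXi aY aYi aZ aZi ah ahb) (semi_fs aX aXi aY aYi aZ aZi ah ahb)
      (semi_fp bX bXi bY bYi bZ bZi bh bhb) (semi_fq bX bXi bY bYi bZ bZi bh bhb)
      (semi_fr bX bXi bY bYi bZ bZi bh bhb) (semi_fs bX bXi bY bYi bZ bZi bh bhb)
      (semi_fp aXi aX aY aYi aZi aZ ahb ah) (semi_fq aXi aX aY aYi aZi aZ ahb ah)
      (semi_fr aXi aX aY aYi aZi aZ ahb ah) (semi_fs aXi aX aY aYi aZi aZ ahb ah),
      n1, n2, n3, n4]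
    simp


section grp
variable {G : Type*} [Group G] {a b : G}

theorem grp_facts (h1 : b⁻¹ * a ^ 2 * b * a ^ 2 = 1) (h2 : a⁻¹ * b ^ 2 * a * b ^ 2 = 1) :
    ∃ x y z : G, a * a = x ∧ b * b = y ∧ a * b * (a * b) = z ∧
      a * x = x * a ∧ a * y = y⁻¹ * a ∧ a * z = z⁻¹ * a ∧
      b * x = x⁻¹ * b ∧ b * y = y * b ∧ b * z = z⁻¹ * b ∧
      x * y = y * x ∧ x * z = z * x ∧ y * z = z * y := by
  refine ⟨_, _, _, rfl, rfl, rfl, ?_⟩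
  have inva : ∀ {g t : G}, g * t = t⁻¹ * g → g * t⁻¹ = t * g := by
    intro g t h
    rw [mul_inv_eq_iff_eq_mul, mul_assoc, h]; group
  have bx : b * (a * a) = (a * a)⁻¹ * b := by
    have : a ^ 2 * b * a ^ 2 = b := by
      calc a ^ 2 * b * a ^ 2 = b * (b⁻¹ * a ^ 2 * b * a ^ 2) := by group
        _ = b := by rw [h1, mul_one]
    rw [eq_inv_mul_iff_mul_eq]
    simpa [pow_two, mul_assoc] using this
  have ay : a * (b * b) = (b * b)⁻¹ * a := by
    have : b ^ 2 * a * b ^ 2 = a := by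
      calc b ^ 2 * a * b ^ 2 = a * (a⁻¹ * b ^ 2 * a * b ^ 2) := by group
        _ = a := by rw [h2, mul_one]
    rw [eq_inv_mul_iff_mul_eq]
    simpa [pow_two, mul_assoc] using this
  have ax : a * (a * a) = a * a * a := by group
  have bny : b * (b * b) = b * b * b := by group
  -- `z` is inverted by `a` and `b`
  have hz : b * a * (b * a) * (a * b * (a * b)) = 1 := by
    calc b * a * (b * a) * (a * b * (a * b)) = b * a * (b * (a * a)) * b * a * b := by group
      _ = b * (a⁻¹ * (b * b)) * a * b := by rw [bx]; group
      _ = 1 := by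
        have : a⁻¹ * (b * b) = (b * b)⁻¹ * a⁻¹ := by
          rw [inv_mul_eq_iff_eq_mul, ← mul_assoc, inva ay]; group
        rw [this]; group
  have hz' : b * a * (b * a) = (a * b * (a * b))⁻¹ := eq_inv_of_mul_eq_one_left hz
  have bz : b * (a * b * (a * b)) = (a * b * (a * b))⁻¹ * b := by rw [← hz']; group
  have az : a * (a * b * (a * b)) = (a * b * (a * b))⁻¹ * a := by
    have : a * b * (a * b) = (b * a * (b * a))⁻¹ := by rw [hz', inv_inv]
    calc a * (a * b * (a * b)) = a * (b * a * (b * a))⁻¹ := by rw [← this]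
      _ = (a * b * (a * b))⁻¹ * a := by group
  have sq : ∀ {g t : G}, g * t = t⁻¹ * g → g * g * t = t * (g * g) := by
    intro g t h
    rw [mul_assoc, h, ← mul_assoc, inva h, mul_assoc]
  exact ⟨ax, ay, az, bx, bny, bz, sq ay, sq az, sq bz⟩
end grp

theorem exists_unit_ring {R : Type*} [Ring R] (d : ℕ) [Fact d.Prime] [CharP R d] (a b : Rˣ)
    (h1 : b⁻¹ * a ^ 2 * b * a ^ 2 = 1) (h2 : a⁻¹ * b ^ 2 * a * b ^ 2 = 1) :
    ∃ x y z : Rˣ, x = a * a ∧ y = b * b ∧ z = a * b * (a * b) ∧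
    ∃ u : Rˣ, ∃ hb : R, (u : R) =
      fp (x : R) (x⁻¹ : Rˣ) y (y⁻¹ : Rˣ) z (z⁻¹ : Rˣ) ((1 - z) ^ (d - 2)) hb
      + fq (x : R) (x⁻¹ : Rˣ) y (y⁻¹ : Rˣ) z (z⁻¹ : Rˣ) ((1 - z) ^ (d - 2)) hb * a
      + fr (x : R) (x⁻¹ : Rˣ) y (y⁻¹ : Rˣ) z (z⁻¹ : Rˣ) ((1 - z) ^ (d - 2)) hb * b
      + fs (x : R) (x⁻¹ : Rˣ) y (y⁻¹ : Rˣ) z (z⁻¹ : Rˣ) ((1 - z) ^ (d - 2)) hb * (a * b) := by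
  obtain ⟨x, y, z, hx, hy, hz, ax, ay, az, bx, hby, bz, xy, xz, yz⟩ := grp_facts h1 h2
  refine ⟨x, y, z, hx.symm, hy.symm, hz.symm, ?_⟩
  have cxy : Commute x y := xy
  have cxz : Commute x z := xz
  have cyz : Commute y z := yz
  let S : Set R := {(x : R), ((x⁻¹ : Rˣ) : R), (y : R), ((y⁻¹ : Rˣ) : R), (z : R), ((z⁻¹ : Rˣ) : R)}
  have hS : ∀ s ∈ S, ∀ t ∈ S, s * t = t * s := by
    have key : ∀ s ∈ ({x, x⁻¹, y, y⁻¹, z, z⁻¹} : Set Rˣ), ∀ t ∈ ({x, x⁻¹, y, y⁻¹, z, z⁻¹} : Set Rˣ),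
        Commute s t := by
      intro s hs t ht
      simp only [Set.mem_insert_iff, Set.mem_singleton_iff] at hs ht
      rcases hs with rfl | rfl | rfl | rfl | rfl | rfl <;>
      rcases ht with rfl | rfl | rfl | rfl | rfl | rfl <;>
      simp only [Commute.inv_left_iff, Commute.inv_right_iff, Commute.refl, cxy, cxz, cyz,
        cxy.symm, cxz.symm, cyz.symm]
    have im : ∀ s ∈ S, ∃ t ∈ ({x, x⁻¹, y, y⁻¹, z, z⁻¹} : Set Rˣ), (t : R) = s := by
      intro s hs
      simp only [S, Set.mem_insert_iff, Set.mem_singleton_iff] at hs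
      rcases hs with rfl | rfl | rfl | rfl | rfl | rfl <;> exact ⟨_, by simp, rfl⟩
    intro s hs t ht
    obtain ⟨s', hs', rfl⟩ := im s hs
    obtain ⟨t', ht', rfl⟩ := im t ht
    exact_mod_cast congrArg Units.val (key s' hs' t' ht').eq
  letI : CommRing (Subring.closure S) := Subring.closureCommRingOfComm hS
  let φ : Subring.closure S →+* R := (Subring.closure S).subtype
  have mem : ∀ s ∈ S, s ∈ Subring.closure S := fun s hs => Subring.subset_closure hs
  let X : Subring.closure S := ⟨x, mem _ (by simp [S])⟩
  let Xi : Subring.closure S := ⟨(x⁻¹ : Rˣ), mem _ (by simp [S])⟩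
  let Y : Subring.closure S := ⟨y, mem _ (by simp [S])⟩
  let Yi : Subring.closure S := ⟨(y⁻¹ : Rˣ), mem _ (by simp [S])⟩
  let Z : Subring.closure S := ⟨z, mem _ (by simp [S])⟩
  let Zi : Subring.closure S := ⟨(z⁻¹ : Rˣ), mem _ (by simp [S])⟩
  have hφ : Function.Injective φ := Subtype.val_injective
  haveI : CharP (Subring.closure S) d := (RingHom.charP_iff φ hφ d).2 inferInstance
  have eX : X * Xi = 1 := hφ (by rw [map_mul, map_one]; exact x.mul_inv)
  have eY : Y * Yi = 1 := hφ (by rw [map_mul, map_one]; exact y.mul_inv)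
  have eZ : Z * Zi = 1 := hφ (by rw [map_mul, map_one]; exact z.mul_inv)
  have K := char_identity d Z Zi eZ
  -- facts in the unit group
  have U : ∀ {g s t : Rˣ}, g * s = t * g → SemiconjBy (g : R) (s : R) (t : R) := by
    intro g s t h
    have := congrArg Units.val h
    rwa [Units.val_mul, Units.val_mul] at this
  have inva : ∀ {g t : Rˣ}, g * t = t⁻¹ * g → g * t⁻¹ = t * g := by
    intro g t h
    rw [mul_inv_eq_iff_eq_mul, mul_assoc, h]; group
  have invc : ∀ {g t : Rˣ}, g * t = t * g → g * t⁻¹ = t⁻¹ * g := by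
    intro g t h
    exact (Commute.inv_right h).eq
  have hh : ∀ {g s t : R}, SemiconjBy g s t → SemiconjBy g ((1 - s) ^ (d - 2)) ((1 - t) ^ (d - 2)) := by
    intro g s t h
    exact ((SemiconjBy.one_right g).sub_right h).pow_right _
  have mh : ∀ W : Subring.closure S, φ ((1 - W) ^ (d - 2)) = (1 - φ W) ^ (d - 2) := by
    intro W; rw [map_pow, map_sub, map_one]
  have fca : a * b * a = y⁻¹ * z * b := by
    rw [← hz]
    have : a * b * (a * b) * b = a * b * a * y := by rw [← hy]; group
    rw [mul_assoc y⁻¹, this]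
    have h3 : a * b * a * y = y * (a * b * a) := by
      calc a * b * a * y = a * b * (a * y) := by group
        _ = a * (b * y⁻¹) * a := by rw [ay]; group
        _ = (a * y⁻¹) * b * a := by rw [invc hby]; group
        _ = _ := by rw [inva ay]; group
    rw [h3]; group
  have fcb : a * b * b = y⁻¹ * a := by rw [mul_assoc, hy, ay]
  have fac : a * (a * b) = x * b := by rw [← mul_assoc, hx]
  have fbc : b * (a * b) = x⁻¹ * z⁻¹ * a := by
    have : b * (a * b) = a⁻¹ * z := by rw [← hz]; group
    rw [this, mul_assoc, ← az, ← hx]; group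
  have fba : b * a = x⁻¹ * y * z⁻¹ * (a * b) := by
    have e : b * a = b * (a * b) * b⁻¹ := by group
    have e2 : a * b⁻¹ = y * (a * b) := by
      have := inva ay
      rw [← mul_assoc, ← this, mul_assoc, ← hy]; group
    have e3 : z⁻¹ * y = y * z⁻¹ := invc yz |>.symm
    rw [e, fbc, mul_assoc, e2, mul_assoc x⁻¹ y, ← e3]; group
  have V : ∀ {g t : Rˣ}, g = t → (g : R) = t := fun h => congrArg Units.val h
  have main := unit_abstract φ (a := (a : R)) (b := (b : R)) (h := (1 - Z) ^ (d - 2))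
    (hb := (1 - Zi) ^ (d - 2)) eX eY eZ K
    (V hx) (V hy) (V hz) (V fac) (V fba) (V fbc) (V fca) (V fcb)
    (U ax) (U (invc ax)) (U ay) (U (inva ay)) (U az) (U (inva az))
    (by rw [mh, mh]; exact hh (U az)) (by rw [mh, mh]; exact hh (U (inva az)))
    (U bx) (U (inva bx)) (U hby) (U (invc hby)) (U bz) (U (inva bz))
    (by rw [mh, mh]; exact hh (U bz)) (by rw [mh, mh]; exact hh (U (inva bz)))
  obtain ⟨u, hu⟩ := main
  rw [mh] at hu
  exact ⟨u, _, hu⟩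


section rep
variable {B : Type*} [CommRing B] (x y z : Bˣ)

/-- The monomial matrix of right multiplication by `a`. -/
def matA : (Matrix (Fin 4) (Fin 4) B)ˣ where
  val := !![0, 1, 0, 0; (x : B), 0, 0, 0; 0, 0, 0, (x⁻¹ : Bˣ) * y * (z⁻¹ : Bˣ);
    0, 0, (y⁻¹ : Bˣ) * z, 0]
  inv := !![0, (x⁻¹ : Bˣ), 0, 0; 1, 0, 0, 0; 0, 0, 0, y * (z⁻¹ : Bˣ);
    0, 0, x * (y⁻¹ : Bˣ) * z, 0]
  val_inv := by
    have hx := x.mul_inv; have hy := y.mul_inv; have hz := z.mul_inv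
    generalize ((x⁻¹ : Bˣ) : B) = xi at *
    generalize ((y⁻¹ : Bˣ) : B) = yi at *
    generalize ((z⁻¹ : Bˣ) : B) = zi at *
    ext i j
    fin_cases i <;> fin_cases j <;> simp [Matrix.mul_apply, Fin.sum_univ_four] <;> grind
  inv_val := by
    have hx := x.mul_inv; have hy := y.mul_inv; have hz := z.mul_inv
    generalize ((x⁻¹ : Bˣ) : B) = xi at *
    generalize ((y⁻¹ : Bˣ) : B) = yi at *
    generalize ((z⁻¹ : Bˣ) : B) = zi at *
    ext i j
    fin_cases i <;> fin_cases j <;> simp [Matrix.mul_apply, Fin.sum_univ_four] <;> grind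

/-- The monomial matrix of right multiplication by `b`. -/
def matB : (Matrix (Fin 4) (Fin 4) B)ˣ where
  val := !![0, 0, 1, 0; 0, 0, 0, 1; (y : B), 0, 0, 0; 0, (y⁻¹ : Bˣ), 0, 0]
  inv := !![0, 0, (y⁻¹ : Bˣ), 0; 0, 0, 0, (y : B); 1, 0, 0, 0; 0, 1, 0, 0]
  val_inv := by
    ext i j
    fin_cases i <;> fin_cases j <;> simp [Matrix.mul_apply, Fin.sum_univ_four]
  inv_val := by
    ext i j
    fin_cases i <;> fin_cases j <;> simp [Matrix.mul_apply, Fin.sum_univ_four]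

theorem matA_inv : (((matA x y z)⁻¹ : (Matrix (Fin 4) (Fin 4) B)ˣ) : Matrix (Fin 4) (Fin 4) B)
    = !![(0 : B), ((x⁻¹ : Bˣ) : B), 0, 0; 1, 0, 0, 0; 0, 0, 0, y * (z⁻¹ : Bˣ);
    0, 0, x * (y⁻¹ : Bˣ) * z, 0] := rfl

theorem matB_inv : (((matB y)⁻¹ : (Matrix (Fin 4) (Fin 4) B)ˣ) : Matrix (Fin 4) (Fin 4) B)
    = !![(0 : B), 0, ((y⁻¹ : Bˣ) : B), 0; 0, 0, 0, (y : B); 1, 0, 0, 0; 0, 1, 0, 0] := rfl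

theorem matA_sq : ((matA x y z ^ 2 : (Matrix (Fin 4) (Fin 4) B)ˣ) : Matrix (Fin 4) (Fin 4) B)
    = Matrix.diagonal ![(x : B), x, (x⁻¹ : Bˣ), (x⁻¹ : Bˣ)] := by
  have hx := x.mul_inv; have hy := y.mul_inv; have hz := z.mul_inv
  rw [pow_two, Units.val_mul]
  simp only [matA]
  generalize ((x⁻¹ : Bˣ) : B) = xi at *
  generalize ((y⁻¹ : Bˣ) : B) = yi at *
  generalize ((z⁻¹ : Bˣ) : B) = zi at *
  ext i j
  fin_cases i <;> fin_cases j <;> simp [Matrix.mul_apply, Fin.sum_univ_four] <;> grind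

theorem matB_sq : ((matB y ^ 2 : (Matrix (Fin 4) (Fin 4) B)ˣ) : Matrix (Fin 4) (Fin 4) B)
    = Matrix.diagonal ![(y : B), (y⁻¹ : Bˣ), y, (y⁻¹ : Bˣ)] := by
  rw [pow_two, Units.val_mul]
  simp only [matB]
  ext i j
  fin_cases i <;> fin_cases j <;> simp [Matrix.mul_apply, Fin.sum_univ_four]

theorem mat_rel1 : (matB y)⁻¹ * matA x y z ^ 2 * matB y * matA x y z ^ 2 = 1 := by
  rw [mul_assoc, mul_assoc, inv_mul_eq_one, ← mul_assoc]
  apply Units.ext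
  simp only [Units.val_mul, matA_sq]
  have hx := x.mul_inv
  simp only [matB]
  ext i j
  fin_cases i <;> fin_cases j <;> simp [Matrix.mul_apply, Fin.sum_univ_four, Matrix.diagonal] <;>
    grind

theorem mat_rel2 : (matA x y z)⁻¹ * matB y ^ 2 * matA x y z * matB y ^ 2 = 1 := by
  rw [mul_assoc, mul_assoc, inv_mul_eq_one, ← mul_assoc]
  apply Units.ext
  simp only [Units.val_mul, matB_sq]
  have hy := y.mul_inv
  simp only [matA]
  ext i j
  fin_cases i <;> fin_cases j <;> simp [Matrix.mul_apply, Fin.sum_univ_four, Matrix.diagonal] <;> grind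

/-- The monomial representation of `P`. -/
def rho : P →* (Matrix (Fin 4) (Fin 4) B)ˣ :=
  PresentedGroup.toGroup (f := ![matA x y z, matB y]) (by
    intro r hr
    rcases hr with rfl | rfl
    · simpa using mat_rel1 x y z
    · simpa using mat_rel2 x y z)

theorem rho_a : rho x y z pa = matA x y z := by simp [rho, pa]
theorem rho_b : rho x y z pb = matB y := by simp [rho, pb]

/-- Every row has at most one nonzero entry. -/
def Mono (M : Matrix (Fin 4) (Fin 4) B) : Prop := ∀ i, ∃ j, ∀ k, k ≠ j → M i k = 0

theorem Mono.mul {M N : Matrix (Fin 4) (Fin 4) B} (hM : Mono M) (hN : Mono N) : Mono (M * N) := by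
  intro i
  obtain ⟨j, hj⟩ := hM i
  obtain ⟨l, hl⟩ := hN j
  refine ⟨l, fun k hk => ?_⟩
  rw [Matrix.mul_apply]
  refine Finset.sum_eq_zero fun m _ => ?_
  by_cases hm : m = j
  · subst hm; rw [hl k hk, mul_zero]
  · rw [hj m hm, zero_mul]

theorem mono_gens : Mono ((matA x y z : (Matrix (Fin 4) (Fin 4) B)ˣ) : Matrix (Fin 4) (Fin 4) B) ∧
    Mono (((matA x y z)⁻¹ : (Matrix (Fin 4) (Fin 4) B)ˣ) : Matrix (Fin 4) (Fin 4) B) ∧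
    Mono ((matB y : (Matrix (Fin 4) (Fin 4) B)ˣ) : Matrix (Fin 4) (Fin 4) B) ∧
    Mono (((matB y)⁻¹ : (Matrix (Fin 4) (Fin 4) B)ˣ) : Matrix (Fin 4) (Fin 4) B) := by
  have aux : ∀ (M : Matrix (Fin 4) (Fin 4) B) (f : Fin 4 → Fin 4),
      (∀ i k, k ≠ f i → M i k = 0) → Mono M := fun M f h i => ⟨f i, h i⟩
  refine ⟨aux _ ![1, 0, 3, 2] ?_, aux _ ![1, 0, 3, 2] ?_, aux _ ![2, 3, 0, 1] ?_,
    aux _ ![2, 3, 0, 1] ?_⟩ <;>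
  · intro i k
    fin_cases i <;> fin_cases k <;> simp [matA_inv, matB_inv, matA, matB]

theorem mono_rho (g : P) : Mono ((rho x y z g : (Matrix (Fin 4) (Fin 4) B)ˣ) :
    Matrix (Fin 4) (Fin 4) B) := by
  obtain ⟨h1, h2, h3, h4⟩ := mono_gens x y z
  induction g using PresentedGroup.induction_on with
  | _ w =>
    induction w using FreeGroup.induction_on with
    | C1 =>
      intro i
      refine ⟨i, fun k hk => ?_⟩
      simp [Matrix.one_apply, hk.symm]
    | of i =>
      fin_cases i
      · exact (rho_a x y z).symm ▸ h1
      · exact (rho_b x y z).symm ▸ h3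
    | inv_of i _ =>
      rw [map_inv, map_inv]
      fin_cases i
      · exact (rho_a x y z).symm ▸ h2
      · exact (rho_b x y z).symm ▸ h4
    | mul u v hu hv =>
      rw [map_mul, map_mul, Units.val_mul]
      exact hu.mul hv
end rep

/-- `M` acts on the first basis row vector as the scalar `β`. -/
def Row {B : Type*} [CommRing B] (M : Matrix (Fin 4) (Fin 4) B) (β : B) : Prop :=
  ∀ j, M 0 j = β * (1 : Matrix (Fin 4) (Fin 4) B) 0 j

section row
variable {B : Type*} [CommRing B] {M N : Matrix (Fin 4) (Fin 4) B} {β γ : B}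

theorem Row.intro (h0 : M 0 0 = β) (h1 : M 0 1 = 0) (h2 : M 0 2 = 0) (h3 : M 0 3 = 0) :
    Row M β := by
  intro j
  match j with
  | 0 => simpa using h0
  | 1 => simpa using h1
  | 2 => simpa using h2
  | 3 => simpa using h3

theorem Row.mul_apply (hM : Row M β) (N : Matrix (Fin 4) (Fin 4) B) (j : Fin 4) :
    (M * N) 0 j = β * N 0 j := by
  rw [Matrix.mul_apply, Fin.sum_univ_four, hM 0, hM 1, hM 2, hM 3]
  simp

theorem Row.mul (hM : Row M β) (hN : Row N γ) : Row (M * N) (β * γ) := by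
  intro j; rw [hM.mul_apply, hN j, mul_assoc]

theorem Row.add (hM : Row M β) (hN : Row N γ) : Row (M + N) (β + γ) := by
  intro j; rw [Matrix.add_apply, hM j, hN j, add_mul]

theorem Row.sub (hM : Row M β) (hN : Row N γ) : Row (M - N) (β - γ) := by
  intro j; rw [Matrix.sub_apply, hM j, hN j, sub_mul]

theorem Row.one : Row (1 : Matrix (Fin 4) (Fin 4) B) 1 := by
  intro j; rw [one_mul]

theorem Row.pow (hM : Row M β) (n : ℕ) : Row (M ^ n) (β ^ n) := by
  induction n with
  | zero => simpa using Row.one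
  | succ n ih => rw [pow_succ, pow_succ]; exact ih.mul hM

theorem Row.four : Row (4 : Matrix (Fin 4) (Fin 4) B) 4 := by
  have := ((Row.one (B := B)).add Row.one).add (Row.one.add Row.one)
  norm_num at this
  exact this

variable {X Xi Y Yi Z Zi h hb : Matrix (Fin 4) (Fin 4) B} {x xi y yi z zi k kb : B}
  (hX : Row X x) (hXi : Row Xi xi) (hY : Row Y y)
  (hYi : Row Yi yi) (hZ : Row Z z) (hZi : Row Zi zi) (hh : Row h k)
include hX hXi hY hYi hZ hZi hh

theorem row_fp : Row (fp X Xi Y Yi Z Zi h hb) (fp x xi y yi z zi k kb) :=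
  (((Row.one.add hX).mul (Row.one.add hY)).mul (Row.one.add hZi)).mul hh

theorem row_fq : Row (fq X Xi Y Yi Z Zi h hb) (fq x xi y yi z zi k kb) :=
  (((Row.one.add hX).mul (Row.one.add (hXi.mul hYi))).add
    ((Row.one.add hYi).mul (Row.one.add hZ))).mul hh

theorem row_fr : Row (fr X Xi Y Yi Z Zi h hb) (fr x xi y yi z zi k kb) :=
  ((((Row.one.add hYi).mul (Row.one.add (hX.mul hY))).mul hZ).add
    ((Row.one.add hX).mul (Row.one.add hZ))).mul hh

theorem row_fs : Row (fs X Xi Y Yi Z Zi h hb) (fs x xi y yi z zi k kb) :=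
  (hZi.mul hZi).add ((((((Row.four.add hX).add hXi).add hY).add hYi).mul hZi).mul hh)
end row

section rows
variable {B : Type*} [CommRing B] (x y z : Bˣ)

theorem row_x : Row ((matA x y z * matA x y z : (Matrix (Fin 4) (Fin 4) B)ˣ) :
    Matrix (Fin 4) (Fin 4) B) (x : B) := by
  simp only [Units.val_mul, matA_inv, matB_inv]
  apply Row.intro <;> simp [matA, matB, Matrix.mul_apply, Fin.sum_univ_four]

theorem row_xi : Row (((matA x y z)⁻¹ * (matA x y z)⁻¹ : (Matrix (Fin 4) (Fin 4) B)ˣ) :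
    Matrix (Fin 4) (Fin 4) B) ((x⁻¹ : Bˣ) : B) := by
  simp only [Units.val_mul, matA_inv, matB_inv]
  apply Row.intro <;> simp [matA, matB, Matrix.mul_apply, Fin.sum_univ_four]

theorem row_y : Row ((matB y * matB y : (Matrix (Fin 4) (Fin 4) B)ˣ) :
    Matrix (Fin 4) (Fin 4) B) (y : B) := by
  simp only [Units.val_mul, matA_inv, matB_inv]
  apply Row.intro <;> simp [matA, matB, Matrix.mul_apply, Fin.sum_univ_four]

theorem row_yi : Row (((matB y)⁻¹ * (matB y)⁻¹ : (Matrix (Fin 4) (Fin 4) B)ˣ) :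
    Matrix (Fin 4) (Fin 4) B) ((y⁻¹ : Bˣ) : B) := by
  simp only [Units.val_mul, matA_inv, matB_inv]
  apply Row.intro <;> simp [matA, matB, Matrix.mul_apply, Fin.sum_univ_four]

theorem row_z : Row ((matA x y z * matB y * (matA x y z * matB y) : (Matrix (Fin 4) (Fin 4) B)ˣ) :
    Matrix (Fin 4) (Fin 4) B) (z : B) := by
  simp only [Units.val_mul, matA_inv, matB_inv]
  apply Row.intro <;> simp [matA, matB, Matrix.mul_apply, Fin.sum_univ_four]
  rw [mul_right_comm]; simp

theorem row_zi : Row (((matB y)⁻¹ * (matA x y z)⁻¹ * ((matB y)⁻¹ * (matA x y z)⁻¹) : (Matrix (Fin 4) (Fin 4) B)ˣ) :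
    Matrix (Fin 4) (Fin 4) B) ((z⁻¹ : Bˣ) : B) := by
  simp only [Units.val_mul, matA_inv, matB_inv]
  apply Row.intro <;> simp [matA, matB, Matrix.mul_apply, Fin.sum_univ_four]

end rows

theorem nontrivial_unit {F B : Type*} [Field F] [CommRing B] [Algebra F B] (d : ℕ)
    [Fact d.Prime] [CharP F d] (x y z : Bˣ)
    (hq : fq (x : B) (x⁻¹ : Bˣ) y (y⁻¹ : Bˣ) z (z⁻¹ : Bˣ) ((1 - z) ^ (d - 2)) 0 ≠ 0)
    (hs : fs (x : B) (x⁻¹ : Bˣ) y (y⁻¹ : Bˣ) z (z⁻¹ : Bˣ) ((1 - z) ^ (d - 2)) 0 ≠ 0) :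
    ∃ u : (MonoidAlgebra F P)ˣ, ¬∃ (c : Fˣ) (g : P),
      (u : MonoidAlgebra F P) = MonoidAlgebra.single g (c : F) := by
  haveI : CharP (MonoidAlgebra F P) d :=
    charP_of_injective_algebraMap (algebraMap F (MonoidAlgebra F P)).injective d
  let ι : P →* (MonoidAlgebra F P)ˣ := (MonoidAlgebra.of F P).toHomUnits
  have r1 : pb⁻¹ * pa ^ 2 * pb * pa ^ 2 = 1 := by
    have := PresentedGroup.one_of_mem (rels := Prels) (x := _) (Or.inl rfl)
    simpa [pa, pb, PresentedGroup.of] using this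
  have r2 : pa⁻¹ * pb ^ 2 * pa * pb ^ 2 = 1 := by
    have := PresentedGroup.one_of_mem (rels := Prels) (x := _) (Or.inr rfl)
    simpa [pa, pb, PresentedGroup.of] using this
  obtain ⟨ux, uy, uz, hux, huy, huz, u, hb, hu⟩ := exists_unit_ring (R := MonoidAlgebra F P) d
    (ι pa) (ι pb) (by simpa using congrArg ι r1) (by simpa using congrArg ι r2)
  refine ⟨u, ?_⟩
  rintro ⟨c, g, hcg⟩
  let σ : P →* Matrix (Fin 4) (Fin 4) B := (Units.coeHom _).comp (rho x y z)
  let Φ : MonoidAlgebra F P →ₐ[F] Matrix (Fin 4) (Fin 4) B := MonoidAlgebra.lift F _ P σ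
  have hΦ : ∀ g, Φ (ι g : MonoidAlgebra F P) = (rho x y z g : (Matrix (Fin 4) (Fin 4) B)ˣ) := by
    intro g
    simp [Φ, ι, σ, MonoidAlgebra.lift_single]
  have e1 : Φ (u : MonoidAlgebra F P) = (c : F) • σ g := by
    rw [hcg]; simp [Φ, MonoidAlgebra.lift_single]
  have hx : ux = ι (pa * pa) := by rw [hux, map_mul]
  have hy : uy = ι (pb * pb) := by rw [huy, map_mul]
  have hz : uz = ι (pa * pb * (pa * pb)) := by rw [huz]; simp only [map_mul]
  have RX : Row (Φ ux) (x : B) := by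
    rw [hx, hΦ]; simp only [map_mul, rho_a]; exact row_x x y z
  have RXi : Row (Φ (ux⁻¹ : (MonoidAlgebra F P)ˣ)) ((x⁻¹ : Bˣ) : B) := by
    rw [hx, ← map_inv, hΦ]; simp only [map_inv, map_mul, mul_inv_rev, rho_a]; exact row_xi x y z
  have RY : Row (Φ uy) (y : B) := by
    rw [hy, hΦ]; simp only [map_mul, rho_b]; exact row_y y
  have RYi : Row (Φ (uy⁻¹ : (MonoidAlgebra F P)ˣ)) ((y⁻¹ : Bˣ) : B) := by
    rw [hy, ← map_inv, hΦ]; simp only [map_inv, map_mul, mul_inv_rev, rho_b]; exact row_yi y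
  have RZ : Row (Φ uz) (z : B) := by
    rw [hz, hΦ]; simp only [map_mul, rho_a, rho_b]; exact row_z x y z
  have RZi : Row (Φ (uz⁻¹ : (MonoidAlgebra F P)ˣ)) ((z⁻¹ : Bˣ) : B) := by
    rw [hz, ← map_inv, hΦ]; simp only [map_inv, map_mul, mul_inv_rev, rho_a, rho_b]
    exact row_zi x y z
  have Rh : Row (Φ ((1 - (uz : MonoidAlgebra F P)) ^ (d - 2))) ((1 - (z : B)) ^ (d - 2)) := by
    rw [map_pow, map_sub, map_one]; exact (Row.one.sub RZ).pow _
  have e2 : ∀ j, Φ (u : MonoidAlgebra F P) 0 j =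
      fp (x : B) (x⁻¹ : Bˣ) y (y⁻¹ : Bˣ) z (z⁻¹ : Bˣ) ((1 - z) ^ (d - 2)) 0
        * (1 : Matrix (Fin 4) (Fin 4) B) 0 j
      + fq (x : B) (x⁻¹ : Bˣ) y (y⁻¹ : Bˣ) z (z⁻¹ : Bˣ) ((1 - z) ^ (d - 2)) 0
        * (matA x y z : Matrix (Fin 4) (Fin 4) B) 0 j
      + fr (x : B) (x⁻¹ : Bˣ) y (y⁻¹ : Bˣ) z (z⁻¹ : Bˣ) ((1 - z) ^ (d - 2)) 0
        * (matB y : Matrix (Fin 4) (Fin 4) B) 0 j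
      + fs (x : B) (x⁻¹ : Bˣ) y (y⁻¹ : Bˣ) z (z⁻¹ : Bˣ) ((1 - z) ^ (d - 2)) 0
        * ((matA x y z : Matrix (Fin 4) (Fin 4) B) * matB y) 0 j := by
    intro j
    have mfp : ∀ X Xi Y Yi Z Zi h hb, Φ (fp X Xi Y Yi Z Zi h hb) =
      fp (Φ X) (Φ Xi) (Φ Y) (Φ Yi) (Φ Z) (Φ Zi) (Φ h) (Φ hb) := by intros; simp [fp]
    have mfq : ∀ X Xi Y Yi Z Zi h hb, Φ (fq X Xi Y Yi Z Zi h hb) =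
      fq (Φ X) (Φ Xi) (Φ Y) (Φ Yi) (Φ Z) (Φ Zi) (Φ h) (Φ hb) := by intros; simp [fq]
    have mfr : ∀ X Xi Y Yi Z Zi h hb, Φ (fr X Xi Y Yi Z Zi h hb) =
      fr (Φ X) (Φ Xi) (Φ Y) (Φ Yi) (Φ Z) (Φ Zi) (Φ h) (Φ hb) := by intros; simp [fr]
    have mfs : ∀ X Xi Y Yi Z Zi h hb, Φ (fs X Xi Y Yi Z Zi h hb) =
      fs (Φ X) (Φ Xi) (Φ Y) (Φ Yi) (Φ Z) (Φ Zi) (Φ h) (Φ hb) := by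
        intros; simp [fs, map_ofNat]
    rw [hu]
    simp only [map_add Φ, map_mul Φ, hΦ, rho_a, rho_b, mfp, mfq, mfr, mfs]
    rw [Matrix.add_apply, Matrix.add_apply, Matrix.add_apply,
      (row_fq RX RXi RY RYi RZ RZi Rh (kb := 0)).mul_apply,
      (row_fr RX RXi RY RYi RZ RZi Rh (kb := 0)).mul_apply,
      (row_fs RX RXi RY RYi RZ RZi Rh (kb := 0)).mul_apply,
      row_fp RX RXi RY RYi RZ RZi Rh (kb := 0) j]
  obtain ⟨j, hj⟩ := mono_rho x y z g 0
  have hz' : ∀ k, k ≠ j → Φ (u : MonoidAlgebra F P) 0 k = 0 := by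
    intro k hk
    rw [e1, Matrix.smul_apply]
    have : σ g 0 k = 0 := hj k hk
    rw [this, smul_zero]
  have f1 := e2 1
  have f3 := e2 3
  simp [matA, matB, Matrix.mul_apply, Fin.sum_univ_four] at f1 f3
  by_cases h1 : (1 : Fin 4) = j
  · have := hz' 3 (by rw [← h1]; decide)
    rw [f3] at this; exact hs this
  · have := hz' 1 h1
    rw [f1] at this; exact hq this

theorem field_nontrivial (F : Type*) [Field F] (d : ℕ) [Fact d.Prime] [CharP F d] :
    ∃ u : (MonoidAlgebra F P)ˣ, ¬∃ (c : Fˣ) (g : P),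
      (u : MonoidAlgebra F P) = MonoidAlgebra.single g (c : F) := by
  by_cases hd : d = 2
  · subst hd
    have two : (2 : LaurentPolynomial F) = 0 := by
      have h : (2 : F) = 0 := by exact_mod_cast CharP.cast_eq_zero F 2
      have := congrArg (algebraMap F (LaurentPolynomial F)) h
      rw [map_ofNat, map_zero] at this
      exact this
    let T : (LaurentPolynomial F)ˣ := ⟨LaurentPolynomial.T 1, LaurentPolynomial.T (-1),
      by rw [← LaurentPolynomial.T_add]; simp, by rw [← LaurentPolynomial.T_add]; simp⟩
    have key : ∀ e : F, LaurentPolynomial.T 1 + LaurentPolynomial.T (-1) + LaurentPolynomial.C e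
        ≠ (0 : LaurentPolynomial F) := by
      intro e h
      have := congrArg (fun f : LaurentPolynomial F => f.coeff 1) h
      simp at this
    refine nontrivial_unit (F := F) (B := LaurentPolynomial F) 2 T 1 1 ?_ ?_
    · intro h
      apply key 0
      rw [← h]
      have hT := T.mul_inv
      have e1 : (T : LaurentPolynomial F) = LaurentPolynomial.T 1 := rfl
      have e2 : ((T⁻¹ : (LaurentPolynomial F)ˣ) : LaurentPolynomial F) = LaurentPolynomial.T (-1) := rfl
      rw [e1, e2] at hT
      rw [e1, e2, map_zero, Units.val_one, inv_one, Units.val_one]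
      simp only [fq, Nat.sub_self, pow_zero]
      linear_combination -hT - 3 * two
    · intro h
      apply key 1
      rw [← h]
      have e1 : (T : LaurentPolynomial F) = LaurentPolynomial.T 1 := rfl
      have e2 : ((T⁻¹ : (LaurentPolynomial F)ˣ) : LaurentPolynomial F) = LaurentPolynomial.T (-1) := rfl
      rw [e1, e2, map_one, Units.val_one, inv_one, Units.val_one]
      simp only [fs, Nat.sub_self, pow_zero]
      linear_combination -3 * two
  · have h2 : (2 : F) ≠ 0 := by
      intro h
      have h' : ((2 : ℕ) : F) = 0 := by exact_mod_cast h
      rw [CharP.cast_eq_zero_iff F d] at h'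
      exact hd ((Nat.prime_dvd_prime_iff_eq Fact.out Nat.prime_two).1 h')
    have hd2 : d - 2 ≠ 0 := by
      have := (Fact.out : d.Prime).two_le
      omega
    let z : (F × F)ˣ := ⟨(1, -1), (1, -1), by simp, by simp⟩
    refine nontrivial_unit (F := F) (B := F × F) d 1 1 z ?_ ?_
    · intro h
      have := congrArg Prod.snd h
      simp [fq, z] at this
      have h3 : (1 + 1 : F) ≠ 0 := by rwa [one_add_one_eq_two]
      simp [h3] at this
    · intro h
      have := congrArg Prod.fst h
      simp [fs, z, hd2] at this

/-- For every prime `p`, the group ring `F_{p²}[P]` contains a non-trivial unit; moreover,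
if `p = 2` or `p ≡ 1 (mod 8)`, the group ring `F_p[P]` contains a non-trivial unit. -/
theorem finite_field_nontrivial_units (p : ℕ) [Fact p.Prime] :
    (∃ u : (MonoidAlgebra (GaloisField p 2) P)ˣ,
      ¬∃ (c : (GaloisField p 2)ˣ) (g : P),
        (u : MonoidAlgebra (GaloisField p 2) P) = MonoidAlgebra.single g (c : GaloisField p 2)) ∧
    ((p = 2 ∨ p % 8 = 1) →
      ∃ u : (MonoidAlgebra (ZMod p) P)ˣ,
        ¬∃ (c : (ZMod p)ˣ) (g : P),
          (u : MonoidAlgebra (ZMod p) P) = MonoidAlgebra.single g (c : ZMod p)) := by 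
  exact ⟨field_nontrivial (GaloisField p 2) p, fun _ => field_nontrivial (ZMod p) p⟩
end
end

section
/- The group P is torsion-free: every element of P of finite order is the identity. -/
noncomputable section

section aux
variable {G : Type*} [Group G] (a b : G)

def PNF (g : G) : Prop :=
  ∃ i j k : ℤ, ∃ c : G, (c = 1 ∨ c = a ∨ c = b ∨ c = a * b) ∧
    g = (a ^ 2) ^ i * (b ^ 2) ^ j * ((a * b) ^ 2) ^ k * c

theorem semiconj_mul_aux {t x y z x' y' z' : G} (hx : SemiconjBy t x x') (hy : SemiconjBy t y y')
    (hz : SemiconjBy t z z') (i j k : ℤ) :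
    t * (x ^ i * y ^ j * z ^ k) = x' ^ i * y' ^ j * z' ^ k * t :=
  ((hx.zpow_right i).mul_right (hy.zpow_right j)).mul_right (hz.zpow_right k)

theorem PNF_all (h1 : b⁻¹ * a ^ 2 * b * a ^ 2 = 1) (h2 : a⁻¹ * b ^ 2 * a * b ^ 2 = 1)
    (hG : Subgroup.closure {a, b} = ⊤) (g : G) : PNF a b g := by
  obtain ⟨x, hx⟩ : ∃ x, x = a ^ 2 := ⟨_, rfl⟩
  obtain ⟨y, hy⟩ : ∃ y, y = b ^ 2 := ⟨_, rfl⟩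
  obtain ⟨z, hz⟩ : ∃ z, z = (a * b) ^ 2 := ⟨_, rfl⟩
  rw [← hx] at h1
  rw [← hy] at h2
  have ax : SemiconjBy a x x := by rw [hx]; exact (Commute.refl a).pow_right 2
  have bY : SemiconjBy b y y := by rw [hy]; exact (Commute.refl b).pow_right 2
  have bx : SemiconjBy b x x⁻¹ := by
    have : b⁻¹ * x * b = x⁻¹ := eq_inv_of_mul_eq_one_left h1
    have h : SemiconjBy b x⁻¹ x := by
      show b * x⁻¹ = x * b
      rw [← this]; group
    simpa using h.inv_right
  have ay : SemiconjBy a y y⁻¹ := by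
    have : a⁻¹ * y * a = y⁻¹ := eq_inv_of_mul_eq_one_left h2
    have h : SemiconjBy a y⁻¹ y := by
      show a * y⁻¹ = y * a
      rw [← this]; group
    simpa using h.inv_right
  have xy : Commute x y := by
    have : SemiconjBy (b * b) x x := by simpa using bx.inv_right.mul_left bx
    rw [← sq, ← hy] at this
    exact Commute.symm this
  have zx : Commute z x := by
    have h : SemiconjBy (a * b) x x⁻¹ := ax.inv_right.mul_left bx
    have := h.inv_right.mul_left h
    rw [← sq, ← hz, inv_inv] at this
    exact this
  have zy : Commute z y := by
    have h : SemiconjBy (a * b) y y⁻¹ := ay.mul_left bY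
    have := h.inv_right.mul_left h
    rw [← sq, ← hz, inv_inv] at this
    exact this
  have az : SemiconjBy a z z⁻¹ := by
    show a * z = z⁻¹ * a
    rw [eq_inv_mul_iff_mul_eq]
    calc z * (a * z) = a * b * (a * b * (a * (a * b * (a * b)))) := by simp only [hz, sq, mul_assoc]
      _ = a * b * a * (b * x * b) * a * b := by simp only [hx, sq, mul_assoc]
      _ = a * b * a * (x⁻¹ * b * b) * a * b := by rw [bx.eq]
      _ = a * b * a⁻¹ * (b ^ 2 * a) * b := by simp [hx, sq, mul_assoc]
      _ = a * b * a⁻¹ * (a * y⁻¹) * b := by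
        have := ay.inv_right.eq
        rw [inv_inv] at this
        rw [← hy, this]
      _ = a := by rw [hy]; group
  have zab : SemiconjBy (a * b) z z := by rw [hz]; exact (Commute.refl (a * b)).pow_right 2
  have bz : SemiconjBy b z z⁻¹ := by
    have h := (SemiconjBy.inv_symm_left az).inv_right
    rw [inv_inv] at h
    have h' : SemiconjBy a⁻¹ z z⁻¹ := by
      have := SemiconjBy.inv_symm_left az
      simpa using this.inv_right
    simpa using h'.mul_left zab
  have ba : b * a = x⁻¹ * y * z⁻¹ * (a * b) := by
    have e : b * a = x⁻¹ * (a * z) * b⁻¹ := by simp [hx, hz, sq, mul_assoc]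
    have e2 : b⁻¹ = y⁻¹ * b := by rw [hy]; group
    rw [e, az.eq, e2]
    calc x⁻¹ * (z⁻¹ * a) * (y⁻¹ * b) = x⁻¹ * z⁻¹ * (a * y⁻¹) * b := by group
      _ = x⁻¹ * (z⁻¹ * y) * a * b := by rw [ay.inv_right.eq]; group
      _ = _ := by rw [zy.inv_left.eq]; group
  have bab : b * (a * b) = x⁻¹ * z⁻¹ * a := by
    have e : b * (a * b) = x⁻¹ * (a * z) := by simp [hx, hz, sq, mul_assoc]
    rw [e, az.eq]; group
  have mulx : ∀ (i j k l m n : ℤ) (d : G), x ^ i * y ^ j * z ^ k * (x ^ l * y ^ m * z ^ n * d)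
      = x ^ (i + l) * y ^ (j + m) * z ^ (k + n) * d := by
    intro i j k l m n d
    have e1 : z ^ k * x ^ l = x ^ l * z ^ k := (zx.zpow_zpow k l).eq
    have e2 : z ^ k * y ^ m = y ^ m * z ^ k := (zy.zpow_zpow k m).eq
    have e3 : y ^ j * x ^ l = x ^ l * y ^ j := (xy.symm.zpow_zpow j l).eq
    calc _ = x ^ i * y ^ j * (z ^ k * x ^ l) * y ^ m * z ^ n * d := by group
      _ = x ^ i * (y ^ j * x ^ l) * (z ^ k * y ^ m) * z ^ n * d := by rw [e1]; group
      _ = _ := by rw [e2, e3]; group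
  have mk : ∀ (i j k l m n : ℤ) (d : G), (d = 1 ∨ d = a ∨ d = b ∨ d = a * b) →
      PNF a b (x ^ i * y ^ j * z ^ k * (x ^ l * y ^ m * z ^ n * d)) := by
    intro i j k l m n d hd
    refine ⟨i + l, j + m, k + n, d, hd, ?_⟩
    rw [mulx, hx, hy, hz]
  have translate : ∀ (l m n : ℤ) g, PNF a b g → PNF a b (x ^ l * y ^ m * z ^ n * g) := by
    rintro l m n g ⟨i, j, k, c, hc, rfl⟩
    have := mk l m n i j k c hc
    rwa [hx, hy, hz] at this ⊢
  have mula : ∀ g, PNF a b g → PNF a b (a * g) := by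
    rintro g ⟨i, j, k, c, hc, rfl⟩
    rw [← hx, ← hy, ← hz, ← mul_assoc, semiconj_mul_aux ax ay az, inv_zpow', inv_zpow', mul_assoc]
    rcases hc with rfl | rfl | rfl | rfl
    · simpa using mk i (-j) (-k) 0 0 0 a (by simp)
    · have := mk i (-j) (-k) 1 0 0 1 (by simp)
      simpa [← sq, ← hx] using this
    · simpa using mk i (-j) (-k) 0 0 0 (a * c) (by simp)
    · have := mk i (-j) (-k) 1 0 0 b (by simp)
      rw [← mul_assoc a a b, ← sq, ← hx]
      simpa using this
  have mulb : ∀ g, PNF a b g → PNF a b (b * g) := by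
    rintro g ⟨i, j, k, c, hc, rfl⟩
    rw [← hx, ← hy, ← hz, ← mul_assoc, semiconj_mul_aux bx bY bz, inv_zpow', inv_zpow', mul_assoc]
    rcases hc with rfl | rfl | rfl | rfl
    · simpa using mk (-i) j (-k) 0 0 0 b (by simp)
    · have := mk (-i) j (-k) (-1) 1 (-1) (c * b) (by simp)
      rw [ba]
      simpa using this
    · have := mk (-i) j (-k) 0 1 0 1 (by simp)
      simpa [← sq, ← hy] using this
    · have := mk (-i) j (-k) (-1) 0 (-1) a (by simp)
      rw [bab]
      simpa using this
  have hg : g ∈ Subgroup.closure {a, b} := by rw [hG]; trivial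
  induction hg using Subgroup.closure_induction_left with
  | one => exact ⟨0, 0, 0, 1, by simp, by simp⟩
  | mul_left t ht g _ ih =>
    rcases ht with rfl | rfl
    · exact mula _ ih
    · exact mulb _ ih
  | inv_mul_cancel t ht g _ ih =>
    rcases ht with rfl | rfl
    · have := translate (-1) 0 0 _ (mula _ ih)
      have e : t⁻¹ * g = x ^ (-1 : ℤ) * y ^ (0 : ℤ) * z ^ (0 : ℤ) * (t * g) := by
        rw [hx]; group
      rwa [e]
    · have := translate 0 (-1) 0 _ (mulb _ ih)
      have e : t⁻¹ * g = x ^ (0 : ℤ) * y ^ (-1 : ℤ) * z ^ (0 : ℤ) * (t * g) := by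
        rw [hy]; group
      rwa [e]

end aux

theorem Tpow_aux (m : ℤ) (n : ℕ) :
    (Equiv.addRight ((n : ℤ) * m) : Equiv.Perm ℤ) = (Equiv.addRight m : Equiv.Perm ℤ) ^ n := by
  induction n with
  | zero => ext; simp
  | succ n ih => rw [pow_succ, ← ih]; ext u; simp; ring

theorem Tzpow_aux (m n : ℤ) :
    (Equiv.addRight m : Equiv.Perm ℤ) ^ n = (Equiv.addRight (n * m) : Equiv.Perm ℤ) := by
  obtain ⟨n, rfl | rfl⟩ := n.eq_nat_or_neg
  · rw [zpow_natCast, Tpow_aux]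
  · rw [zpow_neg, zpow_natCast, ← Tpow_aux, inv_eq_iff_mul_eq_one]
    ext u; simp

theorem addRight_fin {m : ℤ} (h : IsOfFinOrder (Equiv.addRight m : Equiv.Perm ℤ)) : m = 0 := by
  obtain ⟨n, hn, h⟩ := isOfFinOrder_iff_pow_eq_one.1 h
  rw [← Tpow_aux] at h
  have := congrArg (fun e : Equiv.Perm ℤ => e 0) h
  simp at this
  omega

theorem hom_exists (A B : Equiv.Perm ℤ) (h1 : B⁻¹ * A ^ 2 * B * A ^ 2 = 1)
    (h2 : A⁻¹ * B ^ 2 * A * B ^ 2 = 1) : ∃ f : P →* Equiv.Perm ℤ, f pa = A ∧ f pb = B := by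
  have : ∀ r ∈ Prels, FreeGroup.lift ![A, B] r = 1 := by
    rintro r (rfl | rfl)
    · simpa using h1
    · simpa using h2
  exact ⟨PresentedGroup.toGroup this, by simp [pa], by simp [pb]⟩

theorem pnf (g : P) : PNF pa pb g := by
  apply PNF_all
  · have : PresentedGroup.mk Prels _ = 1 := PresentedGroup.one_of_mem (rels := Prels) (Or.inl rfl)
    exact this
  · have : PresentedGroup.mk Prels _ = 1 := PresentedGroup.one_of_mem (rels := Prels) (Or.inr rfl)
    exact this
  · rw [← PresentedGroup.closure_range_of Prels]
    congr 1
    ext t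
    simp [Fin.exists_fin_two, pa, pb, eq_comm]

/-- The group `P` is torsion-free: every element of finite order is the identity. -/
theorem P_torsion_free : ∀ g : P, IsOfFinOrder g → g = 1 := by
  intro g hg
  obtain ⟨i, j, k, c, hc, rfl⟩ := pnf g
  let T : ℤ → Equiv.Perm ℤ := fun m => Equiv.addRight m
  let R : ℤ → Equiv.Perm ℤ := fun m => Equiv.subLeft m
  have TT : ∀ m n, T m * T n = T (n + m) := by intro m n; ext u; simp [T]; try ring
  have RR : ∀ m n, R m * R n = T (m - n) := by intro m n; ext u; simp [T, R]; try ring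
  have TR : ∀ m n, T m * R n = R (n + m) := by intro m n; ext u; simp [T, R]; try ring
  have RT : ∀ m n, R m * T n = R (m - n) := by intro m n; ext u; simp [T, R]; try ring
  have Ti : ∀ m, (T m)⁻¹ = T (-m) := by
    intro m; rw [inv_eq_iff_mul_eq_one, TT]; ext; simp [T]
  have Ri : ∀ m, (R m)⁻¹ = R m := by
    intro m; rw [inv_eq_iff_mul_eq_one, RR]; ext; simp [T]
  have T0 : T 0 = 1 := by ext; simp [T]
  have Tz : ∀ m (n : ℤ), T m ^ n = T (n * m) := by
    exact fun m n => Tzpow_aux m n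
  have Tf : ∀ m, IsOfFinOrder (T m) → m = 0 := fun m h => addRight_fin h
  clear_value T R
  obtain ⟨f1, f1a, f1b⟩ := hom_exists (T 1) (R 0) (by simp [sq, TT, RR, TR, RT, Ti, Ri, T0])
    (by simp [sq, TT, RR, TR, RT, Ti, Ri, T0])
  obtain ⟨f2, f2a, f2b⟩ := hom_exists (R 1) (T 1) (by simp [sq, TT, RR, TR, RT, Ti, Ri, T0])
    (by simp [sq, TT, RR, TR, RT, Ti, Ri, T0])
  obtain ⟨f3, f3a, f3b⟩ := hom_exists (R 0) (R 1) (by simp [sq, TT, RR, TR, RT, Ti, Ri, T0])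
    (by simp [sq, TT, RR, TR, RT, Ti, Ri, T0])
  have h1 := f1.isOfFinOrder hg
  have h2 := f2.isOfFinOrder hg
  have h3 := f3.isOfFinOrder hg
  rcases hc with rfl | rfl | rfl | rfl
  · simp [f1a, f1b, sq, TT, RR, TR, RT, T0, Tz] at h1
    simp [f2a, f2b, sq, TT, RR, TR, RT, T0, Tz] at h2
    simp [f3a, f3b, sq, TT, RR, TR, RT, T0, Tz] at h3
    have e1 := Tf _ h1
    have e2 := Tf _ h2
    have e3 := Tf _ h3
    obtain rfl : i = 0 := by omega
    obtain rfl : j = 0 := by omega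
    obtain rfl : k = 0 := by omega
    simp
  · simp [f1a, f1b, sq, TT, RR, TR, RT, T0, Tz] at h1
    have := Tf _ h1
    omega
  · simp [f2a, f2b, sq, TT, RR, TR, RT, T0, Tz] at h2
    have := Tf _ h2
    omega
  · simp [f3a, f3b, sq, TT, RR, TR, RT, T0, Tz] at h3
    have := Tf _ h3
    omega
end
end

section
/- The subgroup of P generated by x = a², y = b², z = (ab)² is isomorphic to ℤ³ (the elements x, y, z pairwise commute and generate a free abelian group of rank 3), and this subgroup has index 4 in P. -/
noncomputable section

lemma rel1 : pb⁻¹ * pa ^ 2 * pb * pa ^ 2 = 1 := by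
  have : PresentedGroup.mk Prels ((FreeGroup.of 1)⁻¹ * (FreeGroup.of 0) ^ 2 * (FreeGroup.of 1) *
      (FreeGroup.of 0) ^ 2) = 1 := PresentedGroup.one_of_mem (Or.inl rfl)
  simp only [map_mul, map_inv, map_pow] at this
  exact this

lemma rel2 : pa⁻¹ * pb ^ 2 * pa * pb ^ 2 = 1 := by
  have : PresentedGroup.mk Prels ((FreeGroup.of 0)⁻¹ * (FreeGroup.of 1) ^ 2 * (FreeGroup.of 0) *
      (FreeGroup.of 1) ^ 2) = 1 := PresentedGroup.one_of_mem (Or.inr rfl)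
  simp only [map_mul, map_inv, map_pow] at this
  exact this

/-- `s` is inverted or fixed under conjugation by `g`. -/
def Pm {G : Type*} [Group G] (s g : G) : Prop := g * s = s * g ∨ g * s = s⁻¹ * g

lemma gen_top : Subgroup.closure {pa, pb} = (⊤ : Subgroup P) := by
  rw [← PresentedGroup.closure_range_of Prels]
  congr 1
  ext g
  simp [pa, pb, Fin.exists_fin_two, eq_comm]

/-- Purely group-theoretic consequences of the relations. -/
lemma bx : pb * px = px⁻¹ * pb := by
  have h := rel1
  have : pa ^ 2 * pb * pa ^ 2 = pb := by
    calc _ = pb * (pb⁻¹ * pa ^ 2 * pb * pa ^ 2) := by group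
      _ = pb := by rw [h, mul_one]
  rw [px, eq_inv_mul_iff_mul_eq, ← mul_assoc, this]

lemma ay : pa * py = py⁻¹ * pa := by
  have h := rel2
  have : pb ^ 2 * pa * pb ^ 2 = pa := by
    calc _ = pa * (pa⁻¹ * pb ^ 2 * pa * pb ^ 2) := by group
      _ = pa := by rw [h, mul_one]
  rw [py, eq_inv_mul_iff_mul_eq, ← mul_assoc, this]

lemma ax : pa * px = px * pa := by rw [px]; group
lemma bY : pb * py = py * pb := by rw [py]; group

lemma inv_swap {G : Type*} [Group G] {g s : G} (h : g * s = s⁻¹ * g) : g * s⁻¹ = s * g := by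
  have : g * s * g⁻¹ = s⁻¹ := by rw [h]; group
  have h2 : g * s⁻¹ * g⁻¹ = s := by
    calc g * s⁻¹ * g⁻¹ = (g * s * g⁻¹)⁻¹ := by group
      _ = s := by rw [this, inv_inv]
  calc g * s⁻¹ = (g * s⁻¹ * g⁻¹) * g := by group
    _ = s * g := by rw [h2]

lemma sq_comm {G : Type*} [Group G] {g s : G} (h : g * s = s⁻¹ * g) : g ^ 2 * s = s * g ^ 2 := by
  rw [pow_two, mul_assoc, h, ← mul_assoc, inv_swap h, mul_assoc]

lemma cxy : Commute px py := sq_comm ay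

lemma cxz : Commute px pz := by
  refine Commute.symm (sq_comm ?_)
  rw [mul_assoc, bx, ← mul_assoc, ← mul_assoc]
  congr 1
  rw [px]; group

lemma cyz : Commute py pz := by
  refine Commute.symm (sq_comm ?_)
  rw [mul_assoc, bY, ← mul_assoc, ay, mul_assoc]

lemma az : pa * pz = pz⁻¹ * pa := by
  rw [eq_inv_mul_iff_mul_eq]
  calc pz * (pa * pz) = pa * pb * pa * (pb * px) * pb * pa * pb := by
        simp only [pz, px, pow_two, mul_assoc]
    _ = pa * pb * (pa * px⁻¹ * py * pa) * pb := by
        rw [bx]; simp only [py, pow_two, mul_assoc]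
    _ = pa * pb * (pa⁻¹ * py * pa) * pb := by
        simp only [px, pow_two, mul_assoc, mul_inv_rev, mul_inv_cancel_left]
    _ = pa * pb * (pa⁻¹ * (pa * py⁻¹)) * pb := by
        rw [inv_swap ay, mul_assoc pa⁻¹]
    _ = pa := by simp only [py]; group

lemma bz : pb * pz = pz⁻¹ * pb := by
  have h : pb = pa⁻¹ * (pa * pb) := by group
  have h1 : (pa * pb) * pz = pz * (pa * pb) := by simp only [pz, pow_two, mul_assoc]
  have h2 : pa⁻¹ * pz = pz⁻¹ * pa⁻¹ := by
    rw [inv_mul_eq_iff_eq_mul, ← mul_assoc, inv_swap az]; group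
  calc pb * pz = pa⁻¹ * ((pa * pb) * pz) := by group
    _ = (pa⁻¹ * pz) * (pa * pb) := by rw [h1, mul_assoc]
    _ = pz⁻¹ * pb := by rw [h2]; group

lemma pm_all {s : P} (ha : Pm s pa) (hb : Pm s pb) (g : P) : Pm s g := by
  have hg : g ∈ Subgroup.closure {pa, pb} := by rw [gen_top]; trivial
  induction hg using Subgroup.closure_induction with
  | mem g hg =>
    rcases hg with rfl | rfl
    · exact ha
    · exact hb
  | one => left; simp
  | mul g k _ _ h1 h2 =>
    rcases h1 with h1 | h1 <;> rcases h2 with h2 | h2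
    · left; rw [mul_assoc, h2, ← mul_assoc, h1, mul_assoc]
    · right
      have h1' : g * s⁻¹ = s⁻¹ * g := (show Commute g s from h1).inv_right
      rw [mul_assoc, h2, ← mul_assoc, h1', mul_assoc]
    · right; rw [mul_assoc, h2, ← mul_assoc, h1, mul_assoc]
    · left; rw [mul_assoc, h2, ← mul_assoc, inv_swap h1, mul_assoc]
  | inv g _ h1 =>
    rcases h1 with h1 | h1
    · left; exact (show Commute g s from h1).inv_left
    · right
      rw [inv_mul_eq_iff_eq_mul, ← mul_assoc, inv_swap h1]; group

abbrev HH : Subgroup P := Subgroup.closure {px, py, pz}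

lemma x_mem : px ∈ HH := Subgroup.subset_closure (by simp)
lemma y_mem : py ∈ HH := Subgroup.subset_closure (by simp)
lemma z_mem : pz ∈ HH := Subgroup.subset_closure (by simp)

lemma HH_normal : HH.Normal := by
  have key : ∀ s ∈ HH, ∀ g : P, Pm s g → g * s * g⁻¹ ∈ HH := by
    intro s hs g h
    rcases h with h | h
    · rw [h]; simpa using hs
    · rw [h]; simpa using hs
  refine ⟨fun n hn g => ?_⟩
  induction hn using Subgroup.closure_induction with
  | mem s hs =>
    rcases hs with rfl | rfl | rfl
    · exact key _ x_mem g (pm_all (Or.inl ax) (Or.inr bx) g)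
    · exact key _ y_mem g (pm_all (Or.inr ay) (Or.inl bY) g)
    · exact key _ z_mem g (pm_all (Or.inr az) (Or.inr bz) g)
  | one => simp
  | mul u v _ _ h1 h2 =>
    have := mul_mem h1 h2
    rwa [show g * u * g⁻¹ * (g * v * g⁻¹) = g * (u * v) * g⁻¹ by group] at this
  | inv u _ h1 =>
    have := inv_mem h1
    rwa [show (g * u * g⁻¹)⁻¹ = g * u⁻¹ * g⁻¹ by group] at this

/-- The isometry given by `a`. -/
def permA : Equiv.Perm (ℤ × ℤ × ℤ) where
  toFun p := (p.1 + 1, -p.2.1, 1 - p.2.2)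
  invFun p := (p.1 - 1, -p.2.1, 1 - p.2.2)
  left_inv p := by ext <;> simp
  right_inv p := by ext <;> simp

/-- The isometry given by `b`. -/
def permB : Equiv.Perm (ℤ × ℤ × ℤ) where
  toFun p := (-p.1, p.2.1 + 1, -p.2.2)
  invFun p := (-p.1, p.2.1 - 1, -p.2.2)
  left_inv p := by ext <;> simp
  right_inv p := by ext <;> simp

def phi : P →* Equiv.Perm (ℤ × ℤ × ℤ) :=
  PresentedGroup.toGroup (f := ![permA, permB]) (by
    rintro r (rfl | rfl)
    · ext p <;> simp [pow_two, permA, permB, Equiv.Perm.inv_def, Equiv.symm]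
    · ext p <;> simp [pow_two, permA, permB, Equiv.Perm.inv_def, Equiv.symm])

lemma phi_a : phi pa = permA := by simp [phi, pa]
lemma phi_b : phi pb = permB := by simp [phi, pb]

lemma phi_x : phi px = Equiv.addRight (2, 0, 0) := by
  rw [px, map_pow, phi_a]; ext p <;> simp [pow_two, permA] ; ring
lemma phi_y : phi py = Equiv.addRight (0, 2, 0) := by
  rw [py, map_pow, phi_b]; ext p <;> simp [pow_two, permB] ; ring
lemma phi_z : phi pz = Equiv.addRight (0, 0, 2) := by
  rw [pz, map_pow, map_mul, phi_a, phi_b]; ext p <;> simp [pow_two, permA, permB] ; ring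

def ff : Multiplicative (ℤ × ℤ × ℤ) →* P where
  toFun v := px ^ v.toAdd.1 * py ^ v.toAdd.2.1 * pz ^ v.toAdd.2.2
  map_one' := by simp
  map_mul' u v := by
    have h1 := fun m n : ℤ => ((cxy.zpow_zpow m n)).eq
    have h2 := fun m n : ℤ => ((cxz.zpow_zpow m n)).eq
    have h3 := fun m n : ℤ => ((cyz.zpow_zpow m n)).eq
    simp only [toAdd_mul, Prod.fst_add, Prod.snd_add, zpow_add]
    generalize u.toAdd.1 = a, u.toAdd.2.1 = b, u.toAdd.2.2 = c,
      v.toAdd.1 = d, v.toAdd.2.1 = e, v.toAdd.2.2 = f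
    calc _ = px ^ a * (px ^ d * py ^ b) * (py ^ e * pz ^ c) * pz ^ f := by
          simp only [mul_assoc]
      _ = px ^ a * py ^ b * (px ^ d * pz ^ c) * py ^ e * pz ^ f := by
          rw [h1, h3]; simp only [mul_assoc]
      _ = _ := by rw [h2]; simp only [mul_assoc]

lemma zpow_tr (v : ℤ × ℤ × ℤ) (n : ℤ) :
    (Equiv.addRight v : Equiv.Perm (ℤ × ℤ × ℤ)) ^ n = Equiv.addRight (n • v) := by
  have step : ∀ u w : ℤ × ℤ × ℤ, (Equiv.addRight u : Equiv.Perm (ℤ × ℤ × ℤ)) * Equiv.addRight w =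
      Equiv.addRight (w + u) := fun u w => by
    apply Equiv.ext; intro p; simp [add_assoc]
  induction n using Int.induction_on with
  | zero => apply Equiv.ext; intro p; simp
  | succ k ih => rw [zpow_add_one, ih, step, add_smul, one_smul, add_comm]
  | pred k ih =>
    rw [zpow_sub_one, ih, mul_inv_eq_iff_eq_mul, step, sub_smul, one_smul, add_sub_cancel]

lemma ff_inj : Function.Injective ff := by
  intro u v h
  have h' := congrArg (fun g => phi g (0, 0, 0)) h
  simp [ff, phi_x, phi_y, phi_z, zpow_tr] at h'
  apply Multiplicative.toAdd.injective
  ext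
  · exact h'.1
  · exact h'.2.1
  · exact h'.2.2

lemma ff_range : ff.range = HH := by
  apply le_antisymm
  · rintro _ ⟨v, rfl⟩
    exact mul_mem (mul_mem (zpow_mem x_mem _) (zpow_mem y_mem _)) (zpow_mem z_mem _)
  · rw [Subgroup.closure_le]
    rintro _ (rfl | rfl | rfl)
    · exact ⟨Multiplicative.ofAdd (1, 0, 0), by simp [ff]⟩
    · exact ⟨Multiplicative.ofAdd (0, 1, 0), by simp [ff]⟩
    · exact ⟨Multiplicative.ofAdd (0, 0, 1), by simp [ff]⟩

def psi : P →* Multiplicative (ZMod 2 × ZMod 2) :=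
  PresentedGroup.toGroup (f := ![Multiplicative.ofAdd (1, 0), Multiplicative.ofAdd (0, 1)]) (by
    rintro r (rfl | rfl) <;> simp <;> decide)

lemma psi_a : psi pa = Multiplicative.ofAdd (1, 0) := by simp [psi, pa]
lemma psi_b : psi pb = Multiplicative.ofAdd (0, 1) := by simp [psi, pb]

lemma HH_le : HH ≤ psi.ker := by
  rw [Subgroup.closure_le]
  rintro _ (rfl | rfl | rfl) <;>
    simp only [SetLike.mem_coe, MonoidHom.mem_ker, px, py, pz, map_pow, map_mul, psi_a, psi_b] <;>
    decide

lemma quot_cases {Q : Type*} [Group Q] (A B : Q) (hA : A ^ 2 = 1) (hB : B ^ 2 = 1)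
    (hAB : (A * B) ^ 2 = 1) (q : Q) (hq : q ∈ Subgroup.closure {A, B}) :
    q = 1 ∨ q = A ∨ q = B ∨ q = A * B := by
  rw [pow_two] at hA hB hAB
  have iA : A⁻¹ = A := inv_eq_of_mul_eq_one_left hA
  have iB : B⁻¹ = B := inv_eq_of_mul_eq_one_left hB
  have c : B * A = A * B := by
    have := inv_eq_of_mul_eq_one_left hAB
    rwa [mul_inv_rev, iA, iB] at this
  have eA : ∀ t, A * (A * t) = t := fun t => by rw [← mul_assoc, hA, one_mul]
  have eB : B * (A * B) = A := by rw [← mul_assoc, c, mul_assoc, hB, mul_one]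
  have stA : ∀ t, (t = 1 ∨ t = A ∨ t = B ∨ t = A * B) →
      (A * t = 1 ∨ A * t = A ∨ A * t = B ∨ A * t = A * B) := by
    rintro t (rfl | rfl | rfl | rfl) <;> simp [hA, eA]
  have stB : ∀ t, (t = 1 ∨ t = A ∨ t = B ∨ t = A * B) →
      (B * t = 1 ∨ B * t = A ∨ B * t = B ∨ B * t = A * B) := by
    rintro t (rfl | rfl | rfl | rfl) <;> simp [hB, eB, c]
  induction hq using Subgroup.closure_induction_left with
  | one => simp
  | mul_left x hx y _ ih =>
    rcases hx with rfl | rfl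
    · exact stA _ ih
    · exact stB _ ih
  | inv_mul_cancel x hx y _ ih =>
    rcases hx with rfl | rfl
    · rw [iA]; exact stA _ ih
    · rw [iB]; exact stB _ ih

lemma ker_le : psi.ker ≤ HH := by
  intro g hg
  have := HH_normal
  have one : ∀ t ∈ HH, QuotientGroup.mk' HH t = 1 := fun t ht =>
    (QuotientGroup.eq_one_iff t).2 ht
  have hc := quot_cases (QuotientGroup.mk' HH pa) (QuotientGroup.mk' HH pb)
    (by rw [← map_pow]; exact one _ x_mem) (by rw [← map_pow]; exact one _ y_mem)
    (by rw [← map_mul, ← map_pow]; exact one _ z_mem) (QuotientGroup.mk' HH g) (by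
      have : QuotientGroup.mk' HH g ∈ (Subgroup.closure {pa, pb}).map (QuotientGroup.mk' HH) :=
        ⟨g, by rw [gen_top]; trivial, rfl⟩
      rw [MonoidHom.map_closure] at this
      simpa [Set.image_pair] using this)
  have fin : ∀ c : P, QuotientGroup.mk' HH g = QuotientGroup.mk' HH c → psi c = 1 := by
    intro c h
    have h1 := HH_le (QuotientGroup.eq.1 h)
    rw [MonoidHom.mem_ker] at h1 hg
    rwa [map_mul, map_inv, hg, inv_one, one_mul] at h1
  rcases hc with h | h | h | h
  · exact (QuotientGroup.eq_one_iff g).1 h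
  · have := fin _ h
    rw [psi_a] at this
    exact absurd this (by decide)
  · have := fin _ h
    rw [psi_b] at this
    exact absurd this (by decide)
  · rw [← map_mul] at h
    have := fin _ h
    rw [map_mul, psi_a, psi_b] at this
    exact absurd this (by decide)

lemma psi_surj : Function.Surjective psi := by
  have h : ∀ v : Multiplicative (ZMod 2 × ZMod 2), v = 1 ∨ v = Multiplicative.ofAdd (1, 0) ∨
      v = Multiplicative.ofAdd (0, 1) ∨
      v = Multiplicative.ofAdd (1, 0) * Multiplicative.ofAdd (0, 1) := by decide
  intro v
  rcases h v with rfl | rfl | rfl | rfl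
  · exact ⟨1, map_one _⟩
  · exact ⟨pa, psi_a⟩
  · exact ⟨pb, psi_b⟩
  · exact ⟨pa * pb, by rw [map_mul, psi_a, psi_b]⟩

lemma HH_index : HH.index = 4 := by
  rw [le_antisymm HH_le ker_le, Subgroup.index_ker, MonoidHom.range_eq_top.2 psi_surj,
    Subgroup.card_top]
  simp [Nat.card_eq_fintype_card]

/-- The subgroup of `P` generated by `x = a²`, `y = b²`, `z = (ab)²` is free abelian of
rank 3 (the generators pairwise commute) and has index 4 in `P`. -/
theorem subgroup_xyz_free_abelian_of_index_four :
    Commute px py ∧ Commute px pz ∧ Commute py pz ∧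
    Nonempty ((Subgroup.closure {px, py, pz} : Subgroup P) ≃* Multiplicative (ℤ × ℤ × ℤ)) ∧
    (Subgroup.closure {px, py, pz} : Subgroup P).index = 4 := by
  refine ⟨cxy, cxz, cyz, ⟨?_⟩, HH_index⟩
  exact ((MonoidHom.ofInjective ff_inj).trans (MulEquiv.subgroupCongr ff_range)).symm
end
end

section
/- The assignment sending a to the 4×4 integer matrix with rows (1,0,0,1), (0,−1,0,1), (0,0,−1,0), (0,0,0,1) and b to the 4×4 integer matrix with rows (−1,0,0,0), (0,1,0,1), (0,0,−1,1), (0,0,0,1) extends to a group homomorphism from P to GL(4, ℤ), and this homomorphism is injective. -/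
noncomputable section

/-- The matrix image of `a`. -/
def Ma : Matrix (Fin 4) (Fin 4) ℤ :=
  !![1, 0, 0, 1; 0, -1, 0, 1; 0, 0, -1, 0; 0, 0, 0, 1]

/-- The matrix image of `b`. -/
def Mb : Matrix (Fin 4) (Fin 4) ℤ :=
  !![-1, 0, 0, 0; 0, 1, 0, 1; 0, 0, -1, 1; 0, 0, 0, 1]

section GroupLemmas
variable {G : Type*} [Group G]

/-- The translation part of the normal form. -/
def nf (a b : G) (i j k : ℤ) : G := (a ^ 2) ^ i * (b ^ 2) ^ j * ((a * b) ^ 2) ^ k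

variable {a b : G}

lemma semi_bx (h1 : b⁻¹ * a ^ 2 * b * a ^ 2 = 1) : SemiconjBy b (a ^ 2) (a ^ 2)⁻¹ := by
  have h : b⁻¹ * a ^ 2 * b = (a ^ 2)⁻¹ := eq_inv_of_mul_eq_one_left h1
  have h' : SemiconjBy b (a ^ 2)⁻¹ (a ^ 2) := by
    unfold SemiconjBy
    rw [← h]; group
  simpa using h'.inv_right

lemma semi_az (h1 : b⁻¹ * a ^ 2 * b * a ^ 2 = 1) (h2 : a⁻¹ * b ^ 2 * a * b ^ 2 = 1) :
    SemiconjBy a ((a * b) ^ 2) ((a * b) ^ 2)⁻¹ := by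
  have hb : b * a ^ 2 = (a ^ 2)⁻¹ * b := semi_bx h1
  have ha : a * b ^ 2 = (b ^ 2)⁻¹ * a := semi_bx h2
  have hb2 : b ^ 2 * a = a * (b ^ 2)⁻¹ := by
    have := (semi_bx h2).inv_right
    rw [inv_inv] at this
    exact this.eq.symm
  unfold SemiconjBy
  rw [eq_inv_mul_iff_mul_eq]
  calc (a * b) ^ 2 * (a * (a * b) ^ 2) = a * b * a * (b * a ^ 2) * b * a * b := by
        simp only [pow_two, mul_assoc]
    _ = a * b * a⁻¹ * (b ^ 2 * a) * b := by rw [hb]; simp [pow_two, mul_assoc]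
    _ = a := by rw [hb2]; simp [pow_two, mul_assoc]

lemma semi_bz (h1 : b⁻¹ * a ^ 2 * b * a ^ 2 = 1) (h2 : a⁻¹ * b ^ 2 * a * b ^ 2 = 1) :
    SemiconjBy b ((a * b) ^ 2) ((a * b) ^ 2)⁻¹ := by
  have hb : b * a ^ 2 = (a ^ 2)⁻¹ * b := semi_bx h1
  have ha : a * b ^ 2 = (b ^ 2)⁻¹ * a := semi_bx h2
  unfold SemiconjBy
  rw [eq_inv_mul_iff_mul_eq]
  calc (a * b) ^ 2 * (b * (a * b) ^ 2) = a * b * (a * b ^ 2) * a * b * a * b := by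
        simp only [pow_two, mul_assoc]
    _ = a * b⁻¹ * a ^ 2 * b * a * b := by rw [ha]; simp [pow_two, mul_assoc]
    _ = a * b⁻¹ * (a ^ 2 * b * a ^ 2) * a⁻¹ * b := by simp [pow_two, mul_assoc]
    _ = b := by rw [mul_assoc (a ^ 2), hb]; simp [mul_assoc]

lemma comm_xy (h1 : b⁻¹ * a ^ 2 * b * a ^ 2 = 1) : Commute (a ^ 2) (b ^ 2) := by
  have h := semi_bx h1
  have h' := h.inv_right.mul_left h
  rw [inv_inv, ← pow_two] at h'
  exact Commute.symm h'

lemma comm_xz (h1 : b⁻¹ * a ^ 2 * b * a ^ 2 = 1) (h2 : a⁻¹ * b ^ 2 * a * b ^ 2 = 1) :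
    Commute (a ^ 2) ((a * b) ^ 2) := by
  have h := semi_az h1 h2
  have h' := h.inv_right.mul_left h
  rw [inv_inv, ← pow_two] at h'
  exact h'

lemma comm_yz (h1 : b⁻¹ * a ^ 2 * b * a ^ 2 = 1) (h2 : a⁻¹ * b ^ 2 * a * b ^ 2 = 1) :
    Commute (b ^ 2) ((a * b) ^ 2) := by
  have h := semi_bz h1 h2
  have h' := h.inv_right.mul_left h
  rw [inv_inv, ← pow_two] at h'
  exact h'

lemma nf_mul (h1 : b⁻¹ * a ^ 2 * b * a ^ 2 = 1) (h2 : a⁻¹ * b ^ 2 * a * b ^ 2 = 1)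
    (i j k i' j' k' : ℤ) :
    nf a b i j k * nf a b i' j' k' = nf a b (i + i') (j + j') (k + k') := by
  unfold nf
  have e1 := ((comm_xy h1).zpow_zpow i' j).eq
  have e2 := ((comm_xz h1 h2).zpow_zpow i' k).eq
  have e3 := ((comm_yz h1 h2).zpow_zpow j' k).eq
  simp only [zpow_add]
  generalize (a ^ 2) ^ i' = X' at *
  generalize (b ^ 2) ^ j' = Y' at *
  generalize (b ^ 2) ^ j = Y at *
  generalize ((a * b) ^ 2) ^ k = Z at *
  generalize (a ^ 2) ^ i = X
  generalize ((a * b) ^ 2) ^ k' = Z'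
  calc X * Y * Z * (X' * Y' * Z') = X * Y * (Z * X') * Y' * Z' := by simp only [mul_assoc]
    _ = X * (Y * X') * (Z * Y') * Z' := by rw [← e2]; simp only [mul_assoc]
    _ = _ := by rw [← e1, ← e3]; simp only [mul_assoc]

lemma a_nf (h1 : b⁻¹ * a ^ 2 * b * a ^ 2 = 1) (h2 : a⁻¹ * b ^ 2 * a * b ^ 2 = 1)
    (i j k : ℤ) : a * nf a b i j k = nf a b i (-j) (-k) * a := by
  have hx : SemiconjBy a (a ^ 2) (a ^ 2) := (Commute.refl a).pow_right 2
  have := ((hx.zpow_right i).mul_right ((semi_bx h2).zpow_right j)).mul_right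
    ((semi_az h1 h2).zpow_right k)
  simpa only [nf, zpow_neg, inv_zpow] using this.eq

lemma b_nf (h1 : b⁻¹ * a ^ 2 * b * a ^ 2 = 1) (h2 : a⁻¹ * b ^ 2 * a * b ^ 2 = 1)
    (i j k : ℤ) : b * nf a b i j k = nf a b (-i) j (-k) * b := by
  have hx : SemiconjBy b (b ^ 2) (b ^ 2) := (Commute.refl b).pow_right 2
  have := (((semi_bx h1).zpow_right i).mul_right (hx.zpow_right j)).mul_right
    ((semi_bz h1 h2).zpow_right k)
  simpa only [nf, zpow_neg, inv_zpow] using this.eq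

/-- An element has a normal form. -/
def HasNF (a b g : G) : Prop :=
  ∃ i j k : ℤ, ∃ c : G, (c = 1 ∨ c = a ∨ c = b ∨ c = a * b) ∧ g = nf a b i j k * c

lemma hasNF_nf (h1 : b⁻¹ * a ^ 2 * b * a ^ 2 = 1) (h2 : a⁻¹ * b ^ 2 * a * b ^ 2 = 1)
    (i j k : ℤ) {g : G} (hg : HasNF a b g) : HasNF a b (nf a b i j k * g) := by
  obtain ⟨i', j', k', c, hc, rfl⟩ := hg
  exact ⟨_, _, _, c, hc, by rw [← mul_assoc, nf_mul h1 h2]⟩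

lemma hasNF_a (h1 : b⁻¹ * a ^ 2 * b * a ^ 2 = 1) (h2 : a⁻¹ * b ^ 2 * a * b ^ 2 = 1)
    {g : G} (hg : HasNF a b g) : HasNF a b (a * g) := by
  obtain ⟨i, j, k, c, hc, rfl⟩ := hg
  rw [← mul_assoc, a_nf h1 h2, mul_assoc]
  apply hasNF_nf h1 h2
  rcases hc with rfl | rfl | rfl | rfl
  · exact ⟨0, 0, 0, a, by simp, by simp [nf]⟩
  · exact ⟨1, 0, 0, 1, by simp, by simp [nf, pow_two]⟩
  · exact ⟨0, 0, 0, a * c, by simp, by simp [nf]⟩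
  · exact ⟨1, 0, 0, b, by simp, by simp [nf, pow_two, mul_assoc]⟩

lemma ba_eq (h1 : b⁻¹ * a ^ 2 * b * a ^ 2 = 1) (h2 : a⁻¹ * b ^ 2 * a * b ^ 2 = 1) :
    b * a = nf a b (-1) 1 (-1) * (a * b) := by
  have e : b * a = nf a b (-1) 0 0 * (a * (nf a b 0 0 1 * (nf a b 0 (-1) 0 * b))) := by
    simp [nf, pow_two, mul_assoc]
  rw [e, ← mul_assoc (nf a b 0 0 1), nf_mul h1 h2, ← mul_assoc a, a_nf h1 h2,
    ← mul_assoc, ← mul_assoc, nf_mul h1 h2, mul_assoc]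
  norm_num

lemma hasNF_b (h1 : b⁻¹ * a ^ 2 * b * a ^ 2 = 1) (h2 : a⁻¹ * b ^ 2 * a * b ^ 2 = 1)
    {g : G} (hg : HasNF a b g) : HasNF a b (b * g) := by
  obtain ⟨i, j, k, c, hc, rfl⟩ := hg
  rw [← mul_assoc, b_nf h1 h2, mul_assoc]
  apply hasNF_nf h1 h2
  rcases hc with rfl | rfl | rfl | rfl
  · exact ⟨0, 0, 0, b, by simp, by simp [nf]⟩
  · exact ⟨_, _, _, _, by simp, ba_eq h1 h2⟩
  · exact ⟨0, 1, 0, 1, by simp, by simp [nf, pow_two]⟩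
  · rw [← mul_assoc, ba_eq h1 h2, mul_assoc]
    apply hasNF_nf h1 h2
    have e : a * b * b = a * nf a b 0 1 0 := by simp [nf, pow_two, mul_assoc]
    rw [e, a_nf h1 h2]
    exact ⟨_, _, _, a, by simp, rfl⟩

end GroupLemmas

lemma hasNF_all (g : P) : HasNF pa pb g := by
  have hg : g ∈ Subgroup.closure (Set.range (PresentedGroup.of : Fin 2 → P)) := by
    rw [PresentedGroup.closure_range_of]; trivial
  induction hg using Subgroup.closure_induction_left with
  | one => exact ⟨0, 0, 0, 1, by simp, by simp [nf]⟩
  | mul_left x hx y hy ih =>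
    obtain ⟨n, rfl⟩ := hx
    fin_cases n
    · exact hasNF_a rel1 rel2 ih
    · exact hasNF_b rel1 rel2 ih
  | inv_mul_cancel x hx y hy ih =>
    obtain ⟨n, rfl⟩ := hx
    fin_cases n
    · have e : pa⁻¹ * y = nf pa pb (-1) 0 0 * (pa * y) := by simp [nf, pow_two, mul_assoc]
      change HasNF pa pb (pa⁻¹ * y)
      rw [e]
      exact hasNF_nf rel1 rel2 _ _ _ (hasNF_a rel1 rel2 ih)
    · have e : pb⁻¹ * y = nf pa pb 0 (-1) 0 * (pb * y) := by simp [nf, pow_two, mul_assoc]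
      change HasNF pa pb (pb⁻¹ * y)
      rw [e]
      exact hasNF_nf rel1 rel2 _ _ _ (hasNF_b rel1 rel2 ih)

/-- Translation matrices. -/
def TM (p q r : ℤ) : Matrix (Fin 4) (Fin 4) ℤ :=
  !![1, 0, 0, p; 0, 1, 0, q; 0, 0, 1, r; 0, 0, 0, 1]

lemma TM_mul (p q r p' q' r' : ℤ) : TM p q r * TM p' q' r' = TM (p + p') (q + q') (r + r') := by
  ext i j
  fin_cases i <;> fin_cases j <;> simp [TM, Matrix.mul_apply, Fin.sum_univ_four, add_comm]

lemma TM_zero : TM 0 0 0 = 1 := by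
  ext i j
  fin_cases i <;> fin_cases j <;> simp [TM]

/-- Translations as units. -/
def TU (p q r : ℤ) : Matrix.GeneralLinearGroup (Fin 4) ℤ where
  val := TM p q r
  inv := TM (-p) (-q) (-r)
  val_inv := by rw [TM_mul]; simp [TM_zero]
  inv_val := by rw [TM_mul]; simp [TM_zero]

lemma TU_mul (p q r p' q' r' : ℤ) : TU p q r * TU p' q' r' = TU (p + p') (q + q') (r + r') :=
  Units.ext (TM_mul p q r p' q' r')

lemma TU_zpow (p q r n : ℤ) : TU p q r ^ n = TU (n * p) (n * q) (n * r) := by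
  induction n using Int.induction_on with
  | zero => simpa using (Units.ext TM_zero.symm : (1 : Matrix.GeneralLinearGroup (Fin 4) ℤ) = TU 0 0 0)
  | succ n ih => rw [zpow_add_one, ih, TU_mul]; congr 1 <;> ring
  | pred n ih =>
    rw [zpow_sub_one, ih, mul_inv_eq_iff_eq_mul, TU_mul]; congr 1 <;> ring

/-- The unit of `Ma`. -/
def Ua : Matrix.GeneralLinearGroup (Fin 4) ℤ where
  val := Ma
  inv := !![1, 0, 0, -1; 0, -1, 0, 1; 0, 0, -1, 0; 0, 0, 0, 1]
  val_inv := by unfold Ma; decide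
  inv_val := by unfold Ma; decide

/-- The unit of `Mb`. -/
def Ub : Matrix.GeneralLinearGroup (Fin 4) ℤ where
  val := Mb
  inv := !![-1, 0, 0, 0; 0, 1, 0, -1; 0, 0, -1, 1; 0, 0, 0, 1]
  val_inv := by unfold Mb; decide
  inv_val := by unfold Mb; decide

lemma Ua_sq : Ua ^ 2 = TU 2 0 0 := by
  rw [pow_two]; apply Units.ext
  change Ma * Ma = TM 2 0 0
  unfold Ma TM; decide

lemma Ub_sq : Ub ^ 2 = TU 0 2 0 := by
  rw [pow_two]; apply Units.ext
  change Mb * Mb = TM 0 2 0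
  unfold Mb TM; decide

lemma Uab_sq : (Ua * Ub) ^ 2 = TU 0 0 (-2) := by
  rw [pow_two]; apply Units.ext
  change (Ma * Mb) * (Ma * Mb) = TM 0 0 (-2)
  unfold Ma Mb TM; decide

lemma U_rel1 : Ub⁻¹ * Ua ^ 2 * Ub * Ua ^ 2 = 1 := by
  rw [Ua_sq, mul_assoc, mul_assoc, inv_mul_eq_one]
  apply Units.ext
  change Mb = TM 2 0 0 * (Mb * TM 2 0 0)
  unfold Mb TM; decide

lemma U_rel2 : Ua⁻¹ * Ub ^ 2 * Ua * Ub ^ 2 = 1 := by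
  rw [Ub_sq, mul_assoc, mul_assoc, inv_mul_eq_one]
  apply Units.ext
  change Ma = TM 0 2 0 * (Ma * TM 0 2 0)
  unfold Ma TM; decide

lemma nf_U (i j k : ℤ) : nf Ua Ub i j k = TU (2 * i) (2 * j) (-2 * k) := by
  unfold nf
  rw [Ua_sq, Ub_sq, Uab_sq, TU_zpow, TU_zpow, TU_zpow, TU_mul, TU_mul]
  congr 1 <;> ring

lemma U_rels : ∀ r ∈ Prels, FreeGroup.lift ![Ua, Ub] r = 1 := by
  intro r hr
  rcases hr with rfl | rfl
  · simpa using U_rel1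
  · simpa using U_rel2

/-- The assignment `a ↦ Ma`, `b ↦ Mb` extends to a group homomorphism `P → GL(4, ℤ)`,
and this homomorphism is injective. -/
theorem faithful_representation :
    ∃ f : P →* Matrix.GeneralLinearGroup (Fin 4) ℤ,
      ((f pa : Matrix (Fin 4) (Fin 4) ℤ) = Ma) ∧
      ((f pb : Matrix (Fin 4) (Fin 4) ℤ) = Mb) ∧
      Function.Injective f := by 
  let f : P →* Matrix.GeneralLinearGroup (Fin 4) ℤ := PresentedGroup.toGroup U_rels
  have fa : f pa = Ua := PresentedGroup.toGroup.of U_rels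
  have fb : f pb = Ub := PresentedGroup.toGroup.of U_rels
  refine ⟨f, by rw [fa]; rfl, by rw [fb]; rfl, ?_⟩
  rw [injective_iff_map_eq_one]
  intro g hg
  obtain ⟨i, j, k, c, hc, rfl⟩ := hasNF_all g
  have hn : f (nf pa pb i j k) = TU (2 * i) (2 * j) (-2 * k) := by
    rw [← nf_U]
    simp only [nf, map_mul, map_zpow, map_pow, fa, fb]
  rw [map_mul, hn] at hg
  rcases hc with rfl | rfl | rfl | rfl
  · rw [map_one, mul_one] at hg
    have hm : TM (2 * i) (2 * j) (-2 * k) = 1 := congrArg Units.val hg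
    have e0 := congrFun (congrFun hm 0) 3
    have e1 := congrFun (congrFun hm 1) 3
    have e2 := congrFun (congrFun hm 2) 3
    simp [TM] at e0 e1 e2
    subst e0 e1 e2
    simp [nf]
  · rw [fa] at hg
    have hm : TM (2 * i) (2 * j) (-2 * k) * Ma = 1 := congrArg Units.val hg
    have e := congrFun (congrFun hm 1) 1
    simp [TM, Ma, Matrix.mul_apply, Fin.sum_univ_four] at e
  · rw [fb] at hg
    have hm : TM (2 * i) (2 * j) (-2 * k) * Mb = 1 := congrArg Units.val hg
    have e := congrFun (congrFun hm 0) 0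
    simp [TM, Mb, Matrix.mul_apply, Fin.sum_univ_four] at e
  · rw [map_mul, fa, fb] at hg
    have hm : TM (2 * i) (2 * j) (-2 * k) * (Ma * Mb) = 1 := congrArg Units.val hg
    have e := congrFun (congrFun hm 0) 0
    simp [TM, Ma, Mb, Matrix.mul_apply, Fin.sum_univ_four] at e
end
end

section
/- Let φ₁ : P → P be the automorphism determined by a ↦ a, b ↦ b⁻¹, let χ₁ : P → Rˣ be the group homomorphism determined by a ↦ s², b ↦ −1, let θ₁ be the R-algebra automorphism of R[P] determined by θ₁(Σ_g λ_g·g) = Σ_g χ₁(g)·λ_g·φ₁(g), and let * : R[P] → R[P] be the R-linear anti-involution extending g ↦ g⁻¹. Then θ₁(α)* = β; in particular, since β = α⁻¹, the unit α is θ₁-unitary. -/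
open MvPolynomial

noncomputable section

/-- The ring `R = ℤ[s,t]/⟨s⁴+1, t⁴+1⟩`. -/
abbrev Rr : Type :=
  MvPolynomial (Fin 2) ℤ ⧸
    Ideal.span {(X 0 : MvPolynomial (Fin 2) ℤ) ^ 4 + 1, (X 1 : MvPolynomial (Fin 2) ℤ) ^ 4 + 1}

def s : Rr := Ideal.Quotient.mk _ (X 0)
def t : Rr := Ideal.Quotient.mk _ (X 1)

/-- The image of a group element in the group ring `R[P]`. -/
def G (g : P) : MonoidAlgebra Rr P := MonoidAlgebra.of Rr P g

def α1 : MonoidAlgebra Rr P :=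
  1 + t ^ 2 • G (px * pz⁻¹) - t ^ 2 • G (px⁻¹ * pz⁻¹) - s ^ 2 • G (py * pz⁻¹)
    + s ^ 2 • G (py⁻¹ * pz⁻¹)

def αa : MonoidAlgebra Rr P :=
  -(s ^ 2 • G px⁻¹) + 1 - G (px⁻¹ * py⁻¹ * pz) + s ^ 2 • G (py * pz)

def αb : MonoidAlgebra Rr P :=
  G (px⁻¹ * py⁻¹ * pz) - t ^ 2 • G (px * pz) + t ^ 2 • G (py⁻¹ * pz ^ 2) - G (pz ^ 2)

def αab : MonoidAlgebra Rr P :=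
  -(t ^ 2 • G (px⁻¹ * pz⁻¹)) - s ^ 2 • G (py * pz⁻¹) + (s ^ 2 * t ^ 2) • G pz⁻¹
    + G (px⁻¹ * py * pz⁻¹) + s ^ 2 • G (px⁻¹ * pz⁻¹ ^ 2) + t ^ 2 • G (py * pz⁻¹ ^ 2)
    - G (pz⁻¹ ^ 2) - (s ^ 2 * t ^ 2) • G (px⁻¹ * py * pz⁻¹ ^ 2)

/-- The unit `α ∈ R[P]`. -/
def αU : MonoidAlgebra Rr P :=
  α1 + s • (αa * G pa) + t • (αb * G pb) + (s * t) • (αab * G (pa * pb))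

def β1 : MonoidAlgebra Rr P :=
  1 + t ^ 2 • G (px⁻¹ * pz) - t ^ 2 • G (px * pz) + s ^ 2 • G (py * pz) - s ^ 2 • G (py⁻¹ * pz)

def βa : MonoidAlgebra Rr P :=
  -1 + s ^ 2 • G px⁻¹ - s ^ 2 • G (py * pz) + G (px⁻¹ * py⁻¹ * pz)

def βb : MonoidAlgebra Rr P :=
  -G (px⁻¹ * py⁻¹ * pz) + t ^ 2 • G (px * pz) - t ^ 2 • G (py⁻¹ * pz ^ 2) + G (pz ^ 2)

def βab : MonoidAlgebra Rr P :=
  (s ^ 2 * t ^ 2) • G (px⁻¹ * py) + 1 - t ^ 2 • G py - s ^ 2 • G px⁻¹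
    - G (px⁻¹ * py * pz) - (s ^ 2 * t ^ 2) • G pz + s ^ 2 • G (py * pz) + t ^ 2 • G (px⁻¹ * pz)

/-- The inverse unit `β ∈ R[P]`. -/
def βU : MonoidAlgebra Rr P :=
  β1 + s • (βa * G pa) + t • (βb * G pb) + (s * t) • (βab * G (pa * pb))

namespace PromAux

/-! ### Components of `α` and `β` over an arbitrary commutative ring -/

section Components
variable {C : Type*} [CommRing C]

def cα1 (s t x x' y y' z z' : C) : C :=
  1 + t ^ 2 * (x * z') - t ^ 2 * (x' * z') - s ^ 2 * (y * z') + s ^ 2 * (y' * z')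
def cαa (s _t _x x' y y' z _z' : C) : C :=
  s * (-(s ^ 2 * x') + 1 - x' * y' * z + s ^ 2 * (y * z))
def cαb (_s t x x' _y y' z _z' : C) : C :=
  t * (x' * y' * z - t ^ 2 * (x * z) + t ^ 2 * (y' * z ^ 2) - z ^ 2)
def cαab (s t _x x' y _y' _z z' : C) : C :=
  s * t * (-(t ^ 2 * (x' * z')) - s ^ 2 * (y * z') + (s ^ 2 * t ^ 2) * z'
    + x' * y * z' + s ^ 2 * (x' * z' ^ 2) + t ^ 2 * (y * z' ^ 2)
    - z' ^ 2 - (s ^ 2 * t ^ 2) * (x' * y * z' ^ 2))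
def cβ1 (s t x x' y y' z _z' : C) : C :=
  1 + t ^ 2 * (x' * z) - t ^ 2 * (x * z) + s ^ 2 * (y * z) - s ^ 2 * (y' * z)
def cβa (s _t _x x' y y' z _z' : C) : C :=
  s * (-1 + s ^ 2 * x' - s ^ 2 * (y * z) + x' * y' * z)
def cβb (_s t x x' _y y' z _z' : C) : C :=
  t * (-(x' * y' * z) + t ^ 2 * (x * z) - t ^ 2 * (y' * z ^ 2) + z ^ 2)
def cβab (s t _x x' y _y' z _z' : C) : C :=
  s * t * ((s ^ 2 * t ^ 2) * (x' * y) + 1 - t ^ 2 * y - s ^ 2 * x'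
    - x' * y * z - (s ^ 2 * t ^ 2) * z + s ^ 2 * (y * z) + t ^ 2 * (x' * z))

variable {s t x x' y y' z z' : C} (hs : s ^ 4 = -1) (ht : t ^ 4 = -1)
  (hx : x * x' = 1) (hy : y * y' = 1) (hz : z * z' = 1)
include hs ht hx hy hz

theorem id_αβ_1 :
    cα1 s t x x' y y' z z' * cβ1 s t x x' y y' z z'
      + cαa s t x x' y y' z z' * cβa s t x x' y' y z' z * (x)
      + cαb s t x x' y y' z z' * cβb s t x' x y y' z' z * (y)
      + cαab s t x x' y y' z z' * cβab s t x' x y' y z z' * (z) = 1 := by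
  simp only [cα1, cαa, cαb, cαab, cβ1, cβa, cβb, cβab]
  grind

theorem id_αβ_a :
    cα1 s t x x' y y' z z' * cβa s t x x' y y' z z'
      + cαa s t x x' y y' z z' * cβ1 s t x x' y' y z' z
      + cαb s t x x' y y' z z' * cβab s t x' x y y' z' z * (x' * z')
      + cαab s t x x' y y' z z' * cβb s t x' x y' y z z' * (y') = 0 := by
  simp only [cα1, cαa, cαb, cαab, cβ1, cβa, cβb, cβab]
  grind

theorem id_αβ_b :
    cα1 s t x x' y y' z z' * cβb s t x x' y y' z z'
      + cαb s t x x' y y' z z' * cβ1 s t x' x y y' z' z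
      + cαa s t x x' y y' z z' * cβab s t x x' y' y z' z * (x)
      + cαab s t x x' y y' z z' * cβa s t x' x y' y z z' * (y' * z) = 0 := by
  simp only [cα1, cαa, cαb, cαab, cβ1, cβa, cβb, cβab]
  grind

theorem id_αβ_ab :
    cα1 s t x x' y y' z z' * cβab s t x x' y y' z z'
      + cαab s t x x' y y' z z' * cβ1 s t x' x y' y z z'
      + cαa s t x x' y y' z z' * cβb s t x x' y' y z' z
      + cαb s t x x' y y' z z' * cβa s t x' x y y' z' z * (x' * y * z') = 0 := by
  simp only [cα1, cαa, cαb, cαab, cβ1, cβa, cβb, cβab]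
  grind

theorem id_βα_1 :
    cβ1 s t x x' y y' z z' * cα1 s t x x' y y' z z'
      + cβa s t x x' y y' z z' * cαa s t x x' y' y z' z * (x)
      + cβb s t x x' y y' z z' * cαb s t x' x y y' z' z * (y)
      + cβab s t x x' y y' z z' * cαab s t x' x y' y z z' * (z) = 1 := by
  simp only [cβ1, cβa, cβb, cβab, cα1, cαa, cαb, cαab]
  grind

theorem id_βα_a :
    cβ1 s t x x' y y' z z' * cαa s t x x' y y' z z'
      + cβa s t x x' y y' z z' * cα1 s t x x' y' y z' z
      + cβb s t x x' y y' z z' * cαab s t x' x y y' z' z * (x' * z')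
      + cβab s t x x' y y' z z' * cαb s t x' x y' y z z' * (y') = 0 := by
  simp only [cβ1, cβa, cβb, cβab, cα1, cαa, cαb, cαab]
  grind

theorem id_βα_b :
    cβ1 s t x x' y y' z z' * cαb s t x x' y y' z z'
      + cβb s t x x' y y' z z' * cα1 s t x' x y y' z' z
      + cβa s t x x' y y' z z' * cαab s t x x' y' y z' z * (x)
      + cβab s t x x' y y' z z' * cαa s t x' x y' y z z' * (y' * z) = 0 := by
  simp only [cβ1, cβa, cβb, cβab, cα1, cαa, cαb, cαab]
  grind

theorem id_βα_ab :
    cβ1 s t x x' y y' z z' * cαab s t x x' y y' z z'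
      + cβab s t x x' y y' z z' * cα1 s t x' x y' y z z'
      + cβa s t x x' y y' z z' * cαb s t x x' y' y z' z
      + cβb s t x x' y y' z z' * cαa s t x' x y y' z' z * (x' * y * z') = 0 := by
  simp only [cβ1, cβa, cβb, cβab, cα1, cαa, cαb, cαab]
  grind

end Components

/-! ### The involution on components -/

section Star
variable {C : Type*} [CommRing C] {s t x x' y y' z z' : C} (hs : s ^ 4 = -1) (ht : t ^ 4 = -1)
  (hx : x * x' = 1) (hy : y * y' = 1) (hz : z * z' = 1)

theorem st_1 : cα1 s t (-x') (-x) y y' (-z') (-z) = cβ1 s t x x' y y' z z' := by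
  simp only [cα1, cβ1]; ring

include hs hx in
theorem st_a : s ^ 2 * x' * cαa s t (-x') (-x) y' y (-z) (-z') = cβa s t x x' y y' z z' := by
  simp only [cαa, cβa]; grind

theorem st_b : - cαb s t (-x) (-x') y y' (-z) (-z') = cβb s t x x' y y' z z' := by
  simp only [cαb, cβb]; ring

include hs hx hy hz in
theorem st_ab : -(s ^ 2 * y * z') * cαab s t (-x) (-x') y' y (-z') (-z)
    = cβab s t x x' y y' z z' := by
  simp only [cαab, cβab]; grind

end Star

/-! ### Multiplication in the crossed product -/

section Crossed
variable {C A : Type*} [CommRing C] [Ring A] (f : C →+* A) (a b : A)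

/-- Conjugation relations for one element acting on the six Laurent generators. -/
structure Conj (u : A) (s t x x' y y' z z' X X' Y Y' Z Z' : C) : Prop where
  hs : SemiconjBy u (f s) (f s)
  ht : SemiconjBy u (f t) (f t)
  hx : SemiconjBy u (f x) (f X)
  hx' : SemiconjBy u (f x') (f X')
  hy : SemiconjBy u (f y) (f Y)
  hy' : SemiconjBy u (f y') (f Y')
  hz : SemiconjBy u (f z) (f Z)
  hz' : SemiconjBy u (f z') (f Z')

variable {f}
variable {u : A} {s t x x' y y' z z' X X' Y Y' Z Z' : C}
  (h : Conj f u s t x x' y y' z z' X X' Y Y' Z Z')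
include h
/-- Conjugation relations after the substitution `x ↦ -x⁻¹`, `z ↦ -z⁻¹`. -/
theorem Conj.neg : Conj f u s t (-x') (-x) y y' (-z') (-z) (-X') (-X) Y Y' (-Z') (-Z) := by
  obtain ⟨h1, h2, h3, h4, h5, h6, h7, h8⟩ := h
  refine ⟨h1, h2, ?_, ?_, h5, h6, ?_, ?_⟩ <;> simp only [map_neg] <;>
    apply SemiconjBy.neg_right <;> assumption

theorem Conj.cα1 : u * f (cα1 s t x x' y y' z z') = f (cα1 s t X X' Y Y' Z Z') * u := by
  obtain ⟨h1, h2, h3, h4, h5, h6, h7, h8⟩ := h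
  change SemiconjBy _ _ _
  simp only [PromAux.cα1, map_add, map_sub, map_mul, map_neg, map_one, map_pow]
  repeat' first
    | assumption
    | exact SemiconjBy.one_right _
    | apply SemiconjBy.add_right
    | apply SemiconjBy.sub_right
    | apply SemiconjBy.mul_right
    | apply SemiconjBy.pow_right
    | apply SemiconjBy.neg_right
theorem Conj.cαa : u * f (cαa s t x x' y y' z z') = f (cαa s t X X' Y Y' Z Z') * u := by
  obtain ⟨h1, h2, h3, h4, h5, h6, h7, h8⟩ := h
  change SemiconjBy _ _ _
  simp only [PromAux.cαa, map_add, map_sub, map_mul, map_neg, map_one, map_pow]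
  repeat' first
    | assumption
    | exact SemiconjBy.one_right _
    | apply SemiconjBy.add_right
    | apply SemiconjBy.sub_right
    | apply SemiconjBy.mul_right
    | apply SemiconjBy.pow_right
    | apply SemiconjBy.neg_right
theorem Conj.cαb : u * f (cαb s t x x' y y' z z') = f (cαb s t X X' Y Y' Z Z') * u := by
  obtain ⟨h1, h2, h3, h4, h5, h6, h7, h8⟩ := h
  change SemiconjBy _ _ _
  simp only [PromAux.cαb, map_add, map_sub, map_mul, map_neg, map_one, map_pow]
  repeat' first
    | assumption
    | exact SemiconjBy.one_right _
    | apply SemiconjBy.add_right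
    | apply SemiconjBy.sub_right
    | apply SemiconjBy.mul_right
    | apply SemiconjBy.pow_right
    | apply SemiconjBy.neg_right
theorem Conj.cαab : u * f (cαab s t x x' y y' z z') = f (cαab s t X X' Y Y' Z Z') * u := by
  obtain ⟨h1, h2, h3, h4, h5, h6, h7, h8⟩ := h
  change SemiconjBy _ _ _
  simp only [PromAux.cαab, map_add, map_sub, map_mul, map_neg, map_one, map_pow]
  repeat' first
    | assumption
    | exact SemiconjBy.one_right _
    | apply SemiconjBy.add_right
    | apply SemiconjBy.sub_right
    | apply SemiconjBy.mul_right
    | apply SemiconjBy.pow_right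
    | apply SemiconjBy.neg_right
theorem Conj.cβ1 : u * f (cβ1 s t x x' y y' z z') = f (cβ1 s t X X' Y Y' Z Z') * u := by
  obtain ⟨h1, h2, h3, h4, h5, h6, h7, h8⟩ := h
  change SemiconjBy _ _ _
  simp only [PromAux.cβ1, map_add, map_sub, map_mul, map_neg, map_one, map_pow]
  repeat' first
    | assumption
    | exact SemiconjBy.one_right _
    | apply SemiconjBy.add_right
    | apply SemiconjBy.sub_right
    | apply SemiconjBy.mul_right
    | apply SemiconjBy.pow_right
    | apply SemiconjBy.neg_right
theorem Conj.cβa : u * f (cβa s t x x' y y' z z') = f (cβa s t X X' Y Y' Z Z') * u := by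
  obtain ⟨h1, h2, h3, h4, h5, h6, h7, h8⟩ := h
  change SemiconjBy _ _ _
  simp only [PromAux.cβa, map_add, map_sub, map_mul, map_neg, map_one, map_pow]
  repeat' first
    | assumption
    | exact SemiconjBy.one_right _
    | apply SemiconjBy.add_right
    | apply SemiconjBy.sub_right
    | apply SemiconjBy.mul_right
    | apply SemiconjBy.pow_right
    | apply SemiconjBy.neg_right
theorem Conj.cβb : u * f (cβb s t x x' y y' z z') = f (cβb s t X X' Y Y' Z Z') * u := by
  obtain ⟨h1, h2, h3, h4, h5, h6, h7, h8⟩ := h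
  change SemiconjBy _ _ _
  simp only [PromAux.cβb, map_add, map_sub, map_mul, map_neg, map_one, map_pow]
  repeat' first
    | assumption
    | exact SemiconjBy.one_right _
    | apply SemiconjBy.add_right
    | apply SemiconjBy.sub_right
    | apply SemiconjBy.mul_right
    | apply SemiconjBy.pow_right
    | apply SemiconjBy.neg_right
theorem Conj.cβab : u * f (cβab s t x x' y y' z z') = f (cβab s t X X' Y Y' Z Z') * u := by
  obtain ⟨h1, h2, h3, h4, h5, h6, h7, h8⟩ := h
  change SemiconjBy _ _ _
  simp only [PromAux.cβab, map_add, map_sub, map_mul, map_neg, map_one, map_pow]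
  repeat' first
    | assumption
    | exact SemiconjBy.one_right _
    | apply SemiconjBy.add_right
    | apply SemiconjBy.sub_right
    | apply SemiconjBy.mul_right
    | apply SemiconjBy.pow_right
    | apply SemiconjBy.neg_right
end Crossed

section Product
variable {C A : Type*} [CommRing C] [Ring A] (f : C →+* A) {a b : A}

theorem crossed_mul {x x' y y' z z' : C}
    (haa : a * a = f x) (hbb : b * b = f y) (hba : b * a = f (x' * y * z') * (a * b))
    (haab : a * (a * b) = f x * b) (haba : a * b * a = f (y' * z) * b)
    (hbab : b * (a * b) = f (x' * z') * a) (habb : a * b * b = f y' * a)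
    (habab : a * b * (a * b) = f z)
    {c1 ca cb cab d1 da db dab d1a daa dba daba d1b dab' dbb dabb d1c dac dbc dabc : C}
    (h1a : a * f d1 = f d1a * a) (haa' : a * f da = f daa * a) (hba' : a * f db = f dba * a)
    (haba' : a * f dab = f daba * a)
    (h1b : b * f d1 = f d1b * b) (hab' : b * f da = f dab' * b) (hbb' : b * f db = f dbb * b)
    (habb' : b * f dab = f dabb * b)
    (h1c : a * b * f d1 = f d1c * (a * b)) (hac' : a * b * f da = f dac * (a * b))
    (hbc' : a * b * f db = f dbc * (a * b))
    (habc' : a * b * f dab = f dabc * (a * b)) :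
    (f c1 + f ca * a + f cb * b + f cab * (a * b)) * (f d1 + f da * a + f db * b + f dab * (a * b))
      = f (c1 * d1 + ca * daa * x + cb * dbb * y + cab * dabc * z)
        + f (c1 * da + ca * d1a + cb * dabb * (x' * z') + cab * dbc * y') * a
        + f (c1 * db + cb * d1b + ca * daba * x + cab * dac * (y' * z)) * b
        + f (c1 * dab + cab * d1c + ca * dba + cb * dab' * (x' * y * z')) * (a * b) := by
  have key : ∀ (c d d' : C) (u v w : A) (m : C), u * f d = f d' * u → u * v = f m * w →
      f c * u * (f d * v) = f (c * d' * m) * w := by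
    intro c d d' u v w m h1 h2
    rw [mul_assoc, ← mul_assoc u, h1, mul_assoc (f d'), h2, map_mul, map_mul]
    simp only [mul_assoc]
  have key1 : ∀ (c d d' : C) (u : A), u * f d = f d' * u →
      f c * u * f d = f (c * d') * u := by
    intro c d d' u h1
    rw [mul_assoc, h1, map_mul, mul_assoc]
  have e1 := key ca da daa a a 1 x haa' (by rw [haa, mul_one])
  have e2 := key ca db dba a b (a * b) 1 hba' (by simp)
  have e3 := key ca dab daba a (a * b) b x haba' haab
  have e4 := key cb da dab' b a (a * b) _ hab' hba
  have e5 := key cb db dbb b b 1 y hbb' (by rw [hbb, mul_one])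
  have e6 := key cb dab dabb b (a * b) a _ habb' hbab
  have e7 := key cab da dac (a * b) a b _ hac' haba
  have e8 := key cab db dbc (a * b) b a _ hbc' habb
  have e9 := key cab dab dabc (a * b) (a * b) 1 z habc' (by rw [habab, mul_one])
  simp only [mul_add, add_mul, e1, e2, e3, e4, e5, e6, e7, e8, e9, key1 _ _ _ _ h1a,
    key1 _ _ _ _ h1b, key1 _ _ _ _ h1c, map_add, mul_one]
  simp only [← mul_assoc, ← map_mul]
  abel

end Product

/-! ### Relations in the Promislow group -/

theorem rel1 : pb⁻¹ * px * pb * px = 1 := by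
  have h := (PresentedGroup.one_of_mem (rels := Prels)
    (x := (FreeGroup.of 1)⁻¹ * (FreeGroup.of 0) ^ 2 * (FreeGroup.of 1) * (FreeGroup.of 0) ^ 2)
    (by simp [Prels]))
  simpa [px, pa, pb, PresentedGroup.of] using h

theorem rel2 : pa⁻¹ * py * pa * py = 1 := by
  have h := (PresentedGroup.one_of_mem (rels := Prels)
    (x := (FreeGroup.of 0)⁻¹ * (FreeGroup.of 1) ^ 2 * (FreeGroup.of 0) * (FreeGroup.of 1) ^ 2)
    (by simp [Prels]))
  simpa [py, pa, pb, PresentedGroup.of] using h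

theorem bx : SemiconjBy pb px px⁻¹ := by
  have h : SemiconjBy pb px⁻¹ px := by
    have := rel1
    rw [mul_eq_one_iff_eq_inv] at this
    rw [SemiconjBy, ← this]; group
  simpa using h.inv_right

theorem ay : SemiconjBy pa py py⁻¹ := by
  have h : SemiconjBy pa py⁻¹ py := by
    have := rel2
    rw [mul_eq_one_iff_eq_inv] at this
    rw [SemiconjBy, ← this]; group
  simpa using h.inv_right

theorem ax : SemiconjBy pa px px := (Commute.refl pa).pow_right 2
theorem b_y : SemiconjBy pb py py := (Commute.refl pb).pow_right 2
theorem abx : SemiconjBy (pa * pb) px px⁻¹ := ax.inv_right.mul_left bx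
theorem aby : SemiconjBy (pa * pb) py py⁻¹ := ay.mul_left b_y
theorem abz : SemiconjBy (pa * pb) pz pz := (Commute.refl (pa * pb)).pow_right 2
theorem xy : Commute px py := by
  have := bx.inv_right.mul_left bx
  rw [inv_inv, ← sq] at this
  exact Commute.symm this
theorem xz : Commute px pz := by
  have := abx.inv_right.mul_left abx
  rw [inv_inv, ← sq] at this
  exact Commute.symm this
theorem yz : Commute py pz := by
  have := aby.inv_right.mul_left aby
  rw [inv_inv, ← sq] at this
  exact Commute.symm this

theorem zinv : pz⁻¹ = pb * pa * pb * pa := by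
  rw [inv_eq_iff_mul_eq_one]
  calc pz * (pb * pa * pb * pa) = pa * pb * (pa * py) * (pa * pb * pa) := by
        simp only [pz, py, sq, mul_assoc]
    _ = pa * pb * py⁻¹ * px * (pb * pa) := by rw [ay.eq]; simp only [px, sq, mul_assoc]
    _ = py * (pa * pb * px) * (pb * pa) := by
        rw [aby.inv_right.eq, inv_inv]; simp only [mul_assoc]
    _ = py * px⁻¹ * (pa * py) * pa := by rw [abx.eq]; simp only [py, sq, mul_assoc]
    _ = py * px⁻¹ * py⁻¹ * px := by rw [ay.eq]; simp only [px, sq, mul_assoc]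
    _ = 1 := by rw [xy.inv_left.symm.eq]; group

theorem az : SemiconjBy pa pz pz⁻¹ := by
  have : SemiconjBy pa pz⁻¹ pz := by
    rw [SemiconjBy, zinv, pz]; simp only [sq, mul_assoc]
  simpa using this.inv_right

theorem bz : SemiconjBy pb pz pz⁻¹ := by
  rw [SemiconjBy, zinv, pz]; simp only [sq, mul_assoc]


theorem ainv : pa⁻¹ = px⁻¹ * pa := by simp only [px]; group
theorem binv : pb⁻¹ = py⁻¹ * pb := by simp only [py]; group
theorem binv' : pb⁻¹ = pb * py⁻¹ := by simp only [py]; group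

theorem g_ba : pb * pa = px⁻¹ * py * pz⁻¹ * (pa * pb) := by
  have h : pb * pa = pz⁻¹ * (pa⁻¹ * pb⁻¹) := by rw [zinv]; group
  rw [h, ainv, binv', ← mul_assoc (px⁻¹ * pa), mul_assoc px⁻¹, mul_assoc px⁻¹,
    aby.inv_right.eq, inv_inv, ← mul_assoc, ← mul_assoc, xz.inv_inv.symm.eq,
    mul_assoc px⁻¹, yz.inv_right.symm.eq]
  simp only [mul_assoc]

theorem g_aab : pa * (pa * pb) = px * pb := by simp only [px, sq, mul_assoc]
theorem g_aba : pa * pb * pa = py⁻¹ * pz * pb := by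
  have h : pa * pb * pa = pz * pb⁻¹ := by simp only [pz, sq]; group
  rw [h, binv, ← mul_assoc, yz.inv_left.eq]
theorem g_bab : pb * (pa * pb) = px⁻¹ * pz⁻¹ * pa := by
  have h : pb * (pa * pb) = pz⁻¹ * pa⁻¹ := by rw [zinv]; group
  rw [h, ainv, ← mul_assoc, xz.inv_inv.eq]
theorem g_abb : pa * pb * pb = py⁻¹ * pa := by
  rw [← ay.eq, py, sq, mul_assoc]

/-! ### The homomorphisms -/

theorem hs4 : s ^ 4 = -1 := by
  rw [eq_neg_iff_add_eq_zero, s, ← map_pow, ← map_one (Ideal.Quotient.mk _), ← map_add]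
  exact Ideal.Quotient.eq_zero_iff_mem.2 (Ideal.subset_span (by simp))
theorem ht4 : t ^ 4 = -1 := by
  rw [eq_neg_iff_add_eq_zero, t, ← map_pow, ← map_one (Ideal.Quotient.mk _), ← map_add]
  exact Ideal.Quotient.eq_zero_iff_mem.2 (Ideal.subset_span (by simp))

def φhom : P →* P := PresentedGroup.toGroup (rels := Prels) (f := ![pa, pb⁻¹]) (by
  intro r hr
  rcases hr with rfl | rfl
  · have h := bx.inv_right
    have h2 := bx
    simp only [SemiconjBy, px, inv_inv] at h h2
    simp only [map_mul, map_inv, map_pow, FreeGroup.lift_apply_of, Matrix.cons_val_zero,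
      Matrix.cons_val_one, inv_inv]
    rw [h2]; group
  · have h := ay.inv_right
    simp only [SemiconjBy, py, inv_inv] at h
    simp only [map_mul, map_inv, map_pow, FreeGroup.lift_apply_of, Matrix.cons_val_zero,
      Matrix.cons_val_one, inv_pow]
    rw [mul_assoc pa⁻¹, mul_assoc pa⁻¹, mul_assoc _ pa, h]; group)

theorem φ_a : φhom pa = pa := PresentedGroup.toGroup.of _
theorem φ_b : φhom pb = pb⁻¹ := PresentedGroup.toGroup.of _

theorem φφ : φhom.comp φhom = MonoidHom.id P := by
  apply PresentedGroup.ext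
  intro i
  fin_cases i
  · change φhom (φhom pa) = pa
    rw [φ_a, φ_a]
  · change φhom (φhom pb) = pb
    rw [φ_b, map_inv, φ_b, inv_inv]

def φE : P ≃* P := MonoidHom.toMulEquiv φhom φhom φφ φφ

def sU : Rrˣ := ⟨s ^ 2, -s ^ 2, by linear_combination -hs4, by linear_combination -hs4⟩

def χhom : P →* Rrˣ := PresentedGroup.toGroup (rels := Prels) (f := ![sU, -1]) (by
  have h : sU ^ 2 * sU ^ 2 = 1 := by
    ext; simp only [sU, Units.val_mul, Units.val_pow_eq_pow_val, Units.val_one]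
    linear_combination (s ^ 4 - 1) * hs4
  intro r hr
  rcases hr with rfl | rfl
  · simp [h]
  · simp only [map_mul, map_inv, map_pow, FreeGroup.lift_apply_of, Matrix.cons_val_zero,
      Matrix.cons_val_one]
    have h2 : ((-1 : Rrˣ)) ^ 2 = 1 := by
      ext; simp only [Units.val_pow_eq_pow_val, Units.val_neg, Units.val_one]; ring
    rw [h2]; group)

theorem χ_a : ((χhom pa : Rrˣ) : Rr) = s ^ 2 := by
  have : χhom pa = sU := PresentedGroup.toGroup.of _
  rw [this]; rfl
theorem χ_b : ((χhom pb : Rrˣ) : Rr) = -1 := by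
  have : χhom pb = -1 := PresentedGroup.toGroup.of _
  rw [this]; rfl

open MonoidAlgebra in
/-- The twisted algebra homomorphism attached to `φ` and `χ`. -/
def tw (φ : P →* P) (χ : P →* Rrˣ) : MonoidAlgebra Rr P →ₐ[Rr] MonoidAlgebra Rr P :=
  MonoidAlgebra.lift Rr (MonoidAlgebra Rr P) P
    { toFun := fun g => single (φ g) (χ g : Rr)
      map_one' := by simp [MonoidAlgebra.one_def]
      map_mul' := by intro g h; simp [MonoidAlgebra.single_mul_single] }

theorem tw_single (φ : P →* P) (χ : P →* Rrˣ) (g : P) (r : Rr) :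
    tw φ χ (MonoidAlgebra.single g r) = MonoidAlgebra.single (φ g) ((χ g : Rr) * r) := by
  simp [tw, MonoidAlgebra.lift_single, mul_comm]

def χinv : P →* Rrˣ where
  toFun g := (χhom (φhom g))⁻¹
  map_one' := by simp
  map_mul' g h := by 
    rw [map_mul, map_mul, mul_inv_rev]; exact Units.ext (mul_comm _ _)

theorem χinv_apply (g : P) : χinv g = (χhom (φhom g))⁻¹ := rfl

def θE : MonoidAlgebra Rr P ≃ₐ[Rr] MonoidAlgebra Rr P :=
  AlgEquiv.ofAlgHom (tw φhom χhom) (tw φhom χinv)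
    (by
      have h : ∀ g, φhom (φhom g) = g := fun g => DFunLike.congr_fun φφ g
      refine MonoidAlgebra.algHom_ext (fun g => ?_) (Subsingleton.elim _ _)
      simp [tw_single, h, χinv_apply])
    (by
      have h : ∀ g, φhom (φhom g) = g := fun g => DFunLike.congr_fun φφ g
      refine MonoidAlgebra.algHom_ext (fun g => ?_) (Subsingleton.elim _ _)
      simp [tw_single, h, χinv_apply])

/-- The anti-involution as an algebra homomorphism to the opposite. -/
def starOp : MonoidAlgebra Rr P →ₐ[Rr] (MonoidAlgebra Rr P)ᵐᵒᵖ :=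
  MonoidAlgebra.lift Rr _ P
    { toFun := fun g => MulOpposite.op (MonoidAlgebra.single g⁻¹ 1)
      map_one' := by simp [MonoidAlgebra.one_def]
      map_mul' := by intro g h; simp [← MulOpposite.op_mul, MonoidAlgebra.single_mul_single] }

theorem starOp_single (g : P) (r : Rr) :
    starOp (MonoidAlgebra.single g r) = MulOpposite.op (MonoidAlgebra.single g⁻¹ r) := by
  simp [starOp, MonoidAlgebra.lift_single, ← MulOpposite.op_smul]

def starL : MonoidAlgebra Rr P →ₗ[Rr] MonoidAlgebra Rr P :=
  (MulOpposite.opLinearEquiv Rr).symm.toLinearMap ∘ₗ starOp.toLinearMap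

theorem starL_apply (u : MonoidAlgebra Rr P) : starL u = (starOp u).unop := rfl

/-! ### The commutative subring -/

theorem G_mul (g h : P) : G (g * h) = G g * G h := map_mul _ _ _
theorem G_one : G 1 = 1 := map_one _
theorem G_pow (g : P) (n : ℕ) : G (g ^ n) = G g ^ n := map_pow _ _ _
theorem G_semi {u g h : P} (H : SemiconjBy u g h) : SemiconjBy (G u) (G g) (G h) := by
  rw [SemiconjBy, ← G_mul, ← G_mul, H.eq]

theorem exists_comm : ∃ (C : Type) (_ : CommRing C) (f : C →+* MonoidAlgebra Rr P),
    Function.Injective f ∧ (∀ r : Rr, ∃ c, f c = algebraMap Rr _ r) ∧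
    (∃ c, f c = G px) ∧ (∃ c, f c = G px⁻¹) ∧ (∃ c, f c = G py) ∧ (∃ c, f c = G py⁻¹) ∧
    (∃ c, f c = G pz) ∧ (∃ c, f c = G pz⁻¹) := by
  let S : Set (MonoidAlgebra Rr P) := {G px, G px⁻¹, G py, G py⁻¹, G pz, G pz⁻¹}
  have hS : ∀ u ∈ S, ∀ v ∈ S, u * v = v * u := by
    have key : ∀ g ∈ ({px, py, pz} : Set P), ∀ h ∈ ({px, py, pz} : Set P), Commute g h := by
      have h1 := xy
      have h2 := xz
      have h3 := yz
      rintro g (rfl | rfl | rfl) h (rfl | rfl | rfl) <;>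
        first | exact Commute.refl _ | assumption | (apply Commute.symm; assumption)
    have hm : ∀ u ∈ S, ∃ g ∈ ({px, py, pz} : Set P), u = G g ∨ u = G g⁻¹ := by
      rintro u (rfl | rfl | rfl | rfl | rfl | rfl) <;> simp
    intro u hu v hv
    obtain ⟨g, hg, rfl | rfl⟩ := hm u hu <;> obtain ⟨h, hh, rfl | rfl⟩ := hm v hv
    · exact (G_semi (key g hg h hh)).eq
    · exact (G_semi (key g hg h hh).inv_right).eq
    · exact (G_semi (key g hg h hh).inv_left).eq
    · exact (G_semi (key g hg h hh).inv_inv).eq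
  have hmem : ∀ u ∈ S, ∃ c : Algebra.adjoin Rr S, (c : MonoidAlgebra Rr P) = u :=
    fun u hu => ⟨⟨u, Algebra.subset_adjoin hu⟩, rfl⟩
  refine ⟨Algebra.adjoin Rr S, Algebra.adjoinCommRingOfComm Rr hS,
    (Algebra.adjoin Rr S).val.toRingHom, Subtype.val_injective,
    fun r => ⟨algebraMap Rr (Algebra.adjoin Rr S) r, rfl⟩,
    hmem _ (by simp [S]), hmem _ (by simp [S]), hmem _ (by simp [S]), hmem _ (by simp [S]),
    hmem _ (by simp [S]), hmem _ (by simp [S])⟩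

/-! ### The main computation -/

theorem τ_single (g : P) (r : Rr) : starOp (θE (MonoidAlgebra.single g r)) =
    MulOpposite.op (MonoidAlgebra.single (φhom g)⁻¹ ((χhom g : Rr) * r)) := by
  have : θE (MonoidAlgebra.single g r) = tw φhom χhom (MonoidAlgebra.single g r) := rfl
  rw [this, tw_single, starOp_single]

theorem τ_G (g : P) : starOp (θE (G g)) =
    MulOpposite.op (algebraMap Rr _ (χhom g : Rr) * G (φhom g)⁻¹) := by
  rw [G, MonoidAlgebra.of_apply, τ_single, G, MonoidAlgebra.of_apply, ← Algebra.smul_def,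
    MonoidAlgebra.smul_single, smul_eq_mul]

theorem φ_x : φhom px = px := by rw [px, map_pow, φ_a]
theorem φ_y : φhom py = py⁻¹ := by rw [py, map_pow, φ_b, inv_pow]
theorem φ_z : φhom pz = pz := by
  have h : pa * pb⁻¹ = py * (pa * pb) := by
    rw [binv', ← mul_assoc, aby.inv_right.eq, inv_inv]
  rw [pz, map_pow, map_mul, φ_a, φ_b, h, sq, sq, ← mul_assoc, mul_assoc py, aby.eq]
  group
theorem χ_x : ((χhom px : Rrˣ) : Rr) = -1 := by
  rw [px, map_pow, Units.val_pow_eq_pow_val, χ_a, ← hs4]; ring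
theorem χ_y : ((χhom py : Rrˣ) : Rr) = 1 := by
  rw [py, map_pow, Units.val_pow_eq_pow_val, χ_b]; ring
theorem χ_z : ((χhom pz : Rrˣ) : Rr) = -1 := by
  rw [pz, map_pow, map_mul, Units.val_pow_eq_pow_val, Units.val_mul, χ_a, χ_b]; linear_combination hs4
theorem χ_inv {g : P} {r r' : Rr} (h : ((χhom g : Rrˣ) : Rr) = r) (hr : r * r' = 1) :
    ((χhom g⁻¹ : Rrˣ) : Rr) = r' := by
  rw [map_inv]
  exact Units.inv_eq_of_mul_eq_one_right (by rw [h, hr])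

theorem star_main {C : Type} [CommRing C] (f : C →+* MonoidAlgebra Rr P)
    {s' t' x x' y y' z z' : C}
    (ex : f x = G px) (ex' : f x' = G px⁻¹) (ey : f y = G py) (ey' : f y' = G py⁻¹)
    (ez : f z = G pz) (ez' : f z' = G pz⁻¹)
    (es : f s' = algebraMap Rr _ s) (et : f t' = algebraMap Rr _ t)
    (hs : s' ^ 4 = -1) (hx : x * x' = 1) (hy : y * y' = 1) (hz : z * z' = 1)
    (Ha : Conj f (G pa) s' t' x x' y y' z z' x x' y' y z' z)
    (Hb : Conj f (G pb) s' t' x x' y y' z z' x' x y y' z' z)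
    (Hab : Conj f (G pa * G pb) s' t' x x' y y' z z' x' x y' y z z')
    (hba : G pb * G pa = f (x' * y * z') * (G pa * G pb))
    (formα : αU = f (cα1 s' t' x x' y y' z z') + f (cαa s' t' x x' y y' z z') * G pa + f (cαb s' t' x x' y y' z z') * G pb
        + f (cαab s' t' x x' y y' z z') * (G pa * G pb))
    (formβ : βU = f (cβ1 s' t' x x' y y' z z') + f (cβa s' t' x x' y y' z z') * G pa + f (cβb s' t' x x' y y' z z') * G pb
        + f (cβab s' t' x x' y y' z z') * (G pa * G pb)) :
    starL (θE αU) = βU := by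
  let τ : MonoidAlgebra Rr P →ₐ[Rr] (MonoidAlgebra Rr P)ᵐᵒᵖ := starOp.comp θE.toAlgHom
  let F : C →+* (MonoidAlgebra Rr P)ᵐᵒᵖ := f.toOpposite (fun p q => by
    rw [Commute, SemiconjBy, ← map_mul, ← map_mul, mul_comm])
  have hF : ∀ c, F c = MulOpposite.op (f c) := fun c => rfl
  have hτ : ∀ g, τ (G g) = MulOpposite.op (algebraMap Rr _ (χhom g : Rr) * G (φhom g)⁻¹) := τ_G
  have Ts : τ (f s') = F s' := by rw [hF, es, AlgHom.commutes]; rfl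
  have Tt : τ (f t') = F t' := by rw [hF, et, AlgHom.commutes]; rfl
  have Tx : τ (f x) = - F x' := by rw [hF, ex, hτ, χ_x, φ_x, ex']; simp only [map_neg, map_one, neg_mul, one_mul, MulOpposite.op_neg]
  have Tx' : τ (f x') = - F x := by
    rw [hF, ex', hτ, χ_inv χ_x (r' := -1) (by ring), map_inv, φ_x, ex, inv_inv]; simp only [map_neg, map_one, neg_mul, one_mul, MulOpposite.op_neg]
  have Ty : τ (f y) = F y := by rw [hF, ey, hτ, χ_y, φ_y, inv_inv]; simp only [map_neg, map_one, neg_mul, one_mul, MulOpposite.op_neg]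
  have Ty' : τ (f y') = F y' := by
    rw [hF, ey', hτ, χ_inv χ_y (r' := 1) (by ring), map_inv, φ_y, inv_inv]; simp only [map_neg, map_one, neg_mul, one_mul, MulOpposite.op_neg]
  have Tz : τ (f z) = - F z' := by rw [hF, ez, hτ, χ_z, φ_z, ez']; simp only [map_neg, map_one, neg_mul, one_mul, MulOpposite.op_neg]
  have Tz' : τ (f z') = - F z := by
    rw [hF, ez', hτ, χ_inv χ_z (r' := -1) (by ring), map_inv, φ_z, ez, inv_inv]; simp only [map_neg, map_one, neg_mul, one_mul, MulOpposite.op_neg]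
  have Ta : τ (G pa) = MulOpposite.op (f (s' ^ 2 * x') * G pa) := by
    rw [hτ, χ_a, φ_a, ainv, G_mul, map_mul, map_pow, map_pow, es, ex', mul_assoc]
  have Tb : τ (G pb) = MulOpposite.op (- G pb) := by
    rw [hτ, χ_b, φ_b, inv_inv]; simp only [map_neg, map_one, neg_mul, one_mul, MulOpposite.op_neg]
  have T1 : τ (f (cα1 s' t' x x' y y' z z')) = F (cα1 s' t' (-x') (-x) y y' (-z') (-z)) := by
    simp only [cα1, map_add, map_sub, map_mul, map_neg, map_one, map_pow, Ts, Tt, Tx, Tx',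
      Ty, Ty', Tz, Tz']
  have Ta_ : τ (f (cαa s' t' x x' y y' z z')) = F (cαa s' t' (-x') (-x) y y' (-z') (-z)) := by
    simp only [cαa, map_add, map_sub, map_mul, map_neg, map_one, map_pow, Ts, Tt, Tx, Tx',
      Ty, Ty', Tz, Tz']
  have Tb_ : τ (f (cαb s' t' x x' y y' z z')) = F (cαb s' t' (-x') (-x) y y' (-z') (-z)) := by
    simp only [cαb, map_add, map_sub, map_mul, map_neg, map_one, map_pow, Ts, Tt, Tx, Tx',
      Ty, Ty', Tz, Tz']
  have Tab_ : τ (f (cαab s' t' x x' y y' z z')) = F (cαab s' t' (-x') (-x) y y' (-z') (-z)) := by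
    simp only [cαab, map_add, map_sub, map_mul, map_neg, map_one, map_pow, Ts, Tt, Tx, Tx',
      Ty, Ty', Tz, Tz']
  have Ka := (Conj.cαa (Ha.neg))
  have Kb := (Conj.cαb (Hb.neg))
  have Kab := (Conj.cαab (Hab.neg))
  have hbx : G pb * f (s' ^ 2 * x') = f (s' ^ 2 * x) * G pb := by
    have h1 : SemiconjBy (G pb) (f (s' ^ 2 * x')) (f (s' ^ 2 * x)) := by
      rw [map_mul, map_mul, map_pow]
      exact (Hb.hs.pow_right 2).mul_right Hb.hx'
    exact h1.eq
  rw [starL_apply]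
  change (τ αU).unop = _
  rw [formα, formβ, map_add, map_add, map_add, map_mul, map_mul, map_mul, map_mul, Ta, Tb, T1, Ta_,
    Tb_, Tab_, hF, hF, hF, hF]
  simp only [← MulOpposite.op_mul, ← MulOpposite.op_add, MulOpposite.unop_op]
  rw [mul_assoc (f (s' ^ 2 * x')), Ka, neg_mul (G pb), Kb, neg_mul (G pb), ← mul_assoc (G pb), hbx,
    mul_assoc (f (s' ^ 2 * x)), hba, neg_mul, mul_assoc (f (s' ^ 2 * x)),
    mul_assoc (f (x' * y * z')), Kab,
    st_1, ← st_a hs hx (t := t') (y := y) (z := z), ← st_b (s := s') (t := t') (x := x),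
    ← st_ab hs hx hy hz (t := t')]
  have e : s' ^ 2 * y * z' = s' ^ 2 * x * (x' * y * z') := by
    linear_combination - s' ^ 2 * y * z' * hx
  rw [e]
  simp only [map_mul, map_neg, mul_assoc, neg_mul]

theorem main : starL (θE αU) = βU ∧ αU * βU = 1 ∧ βU * αU = 1 := by
  obtain ⟨C, _, f, hf, hr, ⟨x, ex⟩, ⟨x', ex'⟩, ⟨y, ey⟩, ⟨y', ey'⟩, ⟨z, ez⟩, ⟨z', ez'⟩⟩ := exists_comm
  obtain ⟨s', es⟩ := hr s
  obtain ⟨t', et⟩ := hr t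
  have hs : s' ^ 4 = -1 := hf (by rw [map_pow, es, ← map_pow, hs4, map_neg, map_neg, map_one, map_one])
  have ht : t' ^ 4 = -1 := hf (by rw [map_pow, et, ← map_pow, ht4, map_neg, map_neg, map_one, map_one])
  have hx : x * x' = 1 := hf (by rw [map_mul, ex, ex', ← G_mul, mul_inv_cancel, G_one, map_one])
  have hy : y * y' = 1 := hf (by rw [map_mul, ey, ey', ← G_mul, mul_inv_cancel, G_one, map_one])
  have hz : z * z' = 1 := hf (by rw [map_mul, ez, ez', ← G_mul, mul_inv_cancel, G_one, map_one])
  have cs : ∀ u, SemiconjBy u (f s') (f s') := fun u => by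
    rw [es]; exact (Algebra.commutes _ _).symm
  have ct : ∀ u, SemiconjBy u (f t') (f t') := fun u => by
    rw [et]; exact (Algebra.commutes _ _).symm
  have Ha : Conj f (G pa) s' t' x x' y y' z z' x x' y' y z' z := by
    refine ⟨cs _, ct _, ?_, ?_, ?_, ?_, ?_, ?_⟩ <;> simp only [ex, ex', ey, ey', ez, ez'] <;>
      apply G_semi
    · exact ax
    · exact ax.inv_right
    · exact ay
    · simpa using ay.inv_right
    · exact az
    · simpa using az.inv_right
  have Hb : Conj f (G pb) s' t' x x' y y' z z' x' x y y' z' z := by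
    refine ⟨cs _, ct _, ?_, ?_, ?_, ?_, ?_, ?_⟩ <;> simp only [ex, ex', ey, ey', ez, ez'] <;>
      apply G_semi
    · exact bx
    · simpa using bx.inv_right
    · exact b_y
    · exact b_y.inv_right
    · exact bz
    · simpa using bz.inv_right
  have Hab : Conj f (G pa * G pb) s' t' x x' y y' z z' x' x y' y z z' := by
    rw [← G_mul]
    refine ⟨cs _, ct _, ?_, ?_, ?_, ?_, ?_, ?_⟩ <;> simp only [ex, ex', ey, ey', ez, ez'] <;>
      apply G_semi
    · exact abx
    · simpa using abx.inv_right
    · exact aby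
    · simpa using aby.inv_right
    · exact abz
    · exact abz.inv_right
  have haa : G pa * G pa = f x := by rw [ex, ← G_mul, px, sq]
  have hbb : G pb * G pb = f y := by rw [ey, ← G_mul, py, sq]
  have hba : G pb * G pa = f (x' * y * z') * (G pa * G pb) := by
    simp only [map_mul, ex', ey, ez', ← G_mul]; rw [g_ba]
  have haab : G pa * (G pa * G pb) = f x * G pb := by
    simp only [ex, ← G_mul]; rw [g_aab]
  have haba : G pa * G pb * G pa = f (y' * z) * G pb := by
    simp only [map_mul, ey', ez, ← G_mul]; rw [g_aba]
  have hbab : G pb * (G pa * G pb) = f (x' * z') * G pa := by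
    simp only [map_mul, ex', ez', ← G_mul]; rw [g_bab]
  have habb : G pa * G pb * G pb = f y' * G pa := by
    simp only [ey', ← G_mul]; rw [g_abb]
  have habab : G pa * G pb * (G pa * G pb) = f z := by
    simp only [ez, ← G_mul]; rw [pz, sq]
  have formα : αU = f (cα1 s' t' x x' y y' z z') + f (cαa s' t' x x' y y' z z') * G pa + f (cαb s' t' x x' y y' z z') * G pb
        + f (cαab s' t' x x' y y' z z') * (G pa * G pb) := by
    simp only [αU, α1, αa, αb, αab, cα1, cαa, cαb, cαab, map_add, map_sub, map_mul, map_neg, map_one,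
      map_pow, es, et, ex, ex', ey, ey', ez, ez', Algebra.smul_def, G_mul, G_pow, mul_assoc]
  have formβ : βU = f (cβ1 s' t' x x' y y' z z') + f (cβa s' t' x x' y y' z z') * G pa + f (cβb s' t' x x' y y' z z') * G pb
        + f (cβab s' t' x x' y y' z z') * (G pa * G pb) := by
    simp only [βU, β1, βa, βb, βab, cβ1, cβa, cβb, cβab, map_add, map_sub, map_mul, map_neg, map_one,
      map_pow, es, et, ex, ex', ey, ey', ez, ez', Algebra.smul_def, G_mul, G_pow, mul_assoc]
  refine ⟨?_, ?_, ?_⟩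
  · exact star_main f ex ex' ey ey' ez ez' es et hs hx hy hz Ha Hb Hab hba formα formβ
  · rw [formα, formβ, crossed_mul f haa hbb hba haab haba hbab habb habab
      Ha.cβ1 Ha.cβa Ha.cβb Ha.cβab Hb.cβ1 Hb.cβa Hb.cβb Hb.cβab
      Hab.cβ1 Hab.cβa Hab.cβb Hab.cβab,
      id_αβ_1 hs ht hx hy hz, id_αβ_a hs ht hx hy hz, id_αβ_b hs ht hx hy hz,
      id_αβ_ab hs ht hx hy hz]
    simp
  · rw [formβ, formα, crossed_mul f haa hbb hba haab haba hbab habb habab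
      Ha.cα1 Ha.cαa Ha.cαb Ha.cαab Hb.cα1 Hb.cαa Hb.cαb Hb.cαab
      Hab.cα1 Hab.cαa Hab.cαb Hab.cαab,
      id_βα_1 hs ht hx hy hz, id_βα_a hs ht hx hy hz, id_βα_b hs ht hx hy hz,
      id_βα_ab hs ht hx hy hz]
    simp

end PromAux

/-- With `φ₁ : P → P` the automorphism `a ↦ a, b ↦ b⁻¹`, `χ₁ : P → Rˣ` the homomorphism
`a ↦ s², b ↦ −1`, `θ₁` the `R`-algebra automorphism of `R[P]` given by
`θ₁(Σ λ_g g) = Σ χ₁(g) λ_g φ₁(g)`, and `*` the `R`-linear anti-involution of `R[P]`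
extending `g ↦ g⁻¹`, we have `θ₁(α)* = β`; in particular, since `β = α⁻¹`, the unit `α`
is `θ₁`-unitary. -/
theorem alpha_theta1_unitary :
    ∃ (φ : P ≃* P) (χ : P →* Rrˣ)
      (θ : MonoidAlgebra Rr P ≃ₐ[Rr] MonoidAlgebra Rr P)
      (star : MonoidAlgebra Rr P →ₗ[Rr] MonoidAlgebra Rr P),
      φ pa = pa ∧ φ pb = pb⁻¹ ∧
      ((χ pa : Rr) = s ^ 2) ∧ ((χ pb : Rr) = -1) ∧
      (∀ (g : P) (r : Rr),
        θ (MonoidAlgebra.single g r) = MonoidAlgebra.single (φ g) ((χ g : Rr) * r)) ∧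
      (∀ (g : P) (r : Rr),
        star (MonoidAlgebra.single g r) = MonoidAlgebra.single g⁻¹ r) ∧
      (∀ u v : MonoidAlgebra Rr P, star (u * v) = star v * star u) ∧
      star (θ αU) = βU ∧ αU * βU = 1 ∧ βU * αU = 1 := by
  refine ⟨PromAux.φE, PromAux.χhom, PromAux.θE, PromAux.starL, PromAux.φ_a, PromAux.φ_b,
    PromAux.χ_a, PromAux.χ_b, fun g r => PromAux.tw_single _ _ g r, fun g r => ?_,
    fun u v => ?_, PromAux.main⟩
  · rw [PromAux.starL_apply, PromAux.starOp_single, MulOpposite.unop_op]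
  · rw [PromAux.starL_apply, map_mul, MulOpposite.unop_mul]; rfl
end
end

section
/- The image of α under the ring homomorphism R[P] → R[P^{ab}] induced by the abelianization map P → P^{ab} equals 1. -/
open MvPolynomial

noncomputable section

theorem ab_x_sq : (Abelianization.of px : Abelianization P) * Abelianization.of px = 1 := by
  have h : (PresentedGroup.mk Prels) ((FreeGroup.of 1)⁻¹ * (FreeGroup.of 0) ^ 2 *
      (FreeGroup.of 1) * (FreeGroup.of 0) ^ 2) = 1 :=
    PresentedGroup.one_of_mem (by simp [Prels])
  have h2 : pb⁻¹ * px * pb * px = 1 := by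
    simp only [map_mul, map_inv, map_pow] at h
    exact h
  have h3 := congrArg (Abelianization.of : P →* Abelianization P) h2
  simp only [map_mul, map_inv, map_one] at h3
  rw [← h3, mul_comm (Abelianization.of pb)⁻¹, inv_mul_cancel_right]

theorem ab_y_sq : (Abelianization.of py : Abelianization P) * Abelianization.of py = 1 := by
  have h : (PresentedGroup.mk Prels) ((FreeGroup.of 0)⁻¹ * (FreeGroup.of 1) ^ 2 *
      (FreeGroup.of 0) * (FreeGroup.of 1) ^ 2) = 1 :=
    PresentedGroup.one_of_mem (by simp [Prels])
  have h2 : pa⁻¹ * py * pa * py = 1 := by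
    simp only [map_mul, map_inv, map_pow] at h
    exact h
  have h3 := congrArg (Abelianization.of : P →* Abelianization P) h2
  simp only [map_mul, map_inv, map_one] at h3
  rw [← h3, mul_comm (Abelianization.of pa)⁻¹, inv_mul_cancel_right]

theorem ab_z : (Abelianization.of pz : Abelianization P) =
    Abelianization.of px * Abelianization.of py := by
  simp only [pz, px, py, map_mul, map_pow, mul_pow]

theorem map_G (g : P) :
    MonoidAlgebra.mapDomainRingHom Rr (Abelianization.of : P →* Abelianization P) (G g) =
      MonoidAlgebra.of Rr (Abelianization P) (Abelianization.of g) := by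
  simp [G]

theorem map_smul_ab (c : Rr) (u : MonoidAlgebra Rr P) :
    MonoidAlgebra.mapDomainRingHom Rr (Abelianization.of : P →* Abelianization P) (c • u) =
      c • MonoidAlgebra.mapDomainRingHom Rr
        (Abelianization.of : P →* Abelianization P) u := by
  simp [MonoidAlgebra.mapDomain_smul]

/-- The image of `α` under the ring homomorphism `R[P] → R[Pᵃᵇ]` induced by the
abelianization map `P → Pᵃᵇ` equals `1`. -/
theorem alpha_abelianization_trivial :
    MonoidAlgebra.mapDomainRingHom Rr (Abelianization.of : P →* Abelianization P) αU = 1 := by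
  have hx := ab_x_sq
  have hy := ab_y_sq
  have hz := ab_z
  have hxi := inv_eq_of_mul_eq_one_left hx
  have hyi := inv_eq_of_mul_eq_one_left hy
  simp only [αU, α1, αa, αb, αab, map_add, map_sub, map_neg, map_mul, map_one, map_smul_ab,
    map_G, map_inv, map_pow, hz, mul_inv, hxi, hyi]
  have HX := congrArg (MonoidAlgebra.of Rr (Abelianization P)) hx
  have HY := congrArg (MonoidAlgebra.of Rr (Abelianization P)) hy
  simp only [map_mul, map_one] at HX HY
  generalize MonoidAlgebra.of Rr (Abelianization P) (Abelianization.of px) = x at *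
  generalize MonoidAlgebra.of Rr (Abelianization P) (Abelianization.of py) = y at *
  generalize MonoidAlgebra.of Rr (Abelianization P) (Abelianization.of pa) = a at *
  generalize MonoidAlgebra.of Rr (Abelianization P) (Abelianization.of pb) = b at *
  have e1 : x * (x * y) = y := by rw [← mul_assoc, HX, one_mul]
  have e2 : y * (x * y) = x := by rw [mul_comm x y, ← mul_assoc, HY, one_mul]
  have e3 : x * y * (x * y) = 1 := by rw [mul_assoc, e2, HX]
  simp only [pow_two (x * y), e1, e2, e3, mul_one]
  have ea : -(s ^ 2 • x) + 1 - 1 + s ^ 2 • x = 0 := by abel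
  have eb : 1 - t ^ 2 • y + t ^ 2 • y - 1 = 0 := by abel
  simp only [ea, eb, zero_mul, smul_zero, add_zero]
  have eab : -(t ^ 2 • y) - s ^ 2 • x + (s ^ 2 * t ^ 2) • (x * y) + 1 + s ^ 2 • x + t ^ 2 • y - 1
      - (s ^ 2 * t ^ 2) • (x * y) = 0 := by abel
  simp only [eab, zero_mul, smul_zero, add_zero]
  abel
end
end

section
/- The group S is isomorphic to the group defined by the presentation ⟨a, b | a⁻¹b²ab², a⁻²ba⁻²b³⟩, via the map sending x ↦ a and y ↦ ab⁻¹. -/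
noncomputable section

/-- The two relators of the Soelberg group `S = ⟨x, y | (xy)²(xy⁻¹)², (yx)²(yx⁻¹)²⟩`. -/
def Srels : Set (FreeGroup (Fin 2)) :=
  {(FreeGroup.of 0 * FreeGroup.of 1) ^ 2 * (FreeGroup.of 0 * (FreeGroup.of 1)⁻¹) ^ 2,
   (FreeGroup.of 1 * FreeGroup.of 0) ^ 2 * (FreeGroup.of 1 * (FreeGroup.of 0)⁻¹) ^ 2}

/-- The Soelberg group. -/
abbrev S : Type := PresentedGroup Srels

def sx : S := PresentedGroup.of 0
def sy : S := PresentedGroup.of 1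

/-- The relators of the presentation `⟨a, b | a⁻¹b²ab², a⁻²ba⁻²b³⟩`. -/
def Qrels : Set (FreeGroup (Fin 2)) :=
  {(FreeGroup.of 0)⁻¹ * (FreeGroup.of 1) ^ 2 * FreeGroup.of 0 * (FreeGroup.of 1) ^ 2,
   ((FreeGroup.of 0) ^ 2)⁻¹ * FreeGroup.of 1 * ((FreeGroup.of 0) ^ 2)⁻¹ * (FreeGroup.of 1) ^ 3}

/-- The group `⟨a, b | a⁻¹b²ab², a⁻²ba⁻²b³⟩`. -/
abbrev Q : Type := PresentedGroup Qrels

def qa : Q := PresentedGroup.of 0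
def qb : Q := PresentedGroup.of 1

theorem rel_two {G : Type*} [Group G] (a b : G) :
    ((a * b⁻¹) * a) ^ 2 * ((a * b⁻¹) * a⁻¹) ^ 2 =
      (a * b ^ 2) * ((a ^ 2)⁻¹ * b * (a ^ 2)⁻¹ * b ^ 3)⁻¹ * (a * b ^ 2)⁻¹ := by
  simp [pow_succ, mul_assoc]

theorem rel_one {G : Type*} [Group G] (a b : G) :
    (a * (a * b⁻¹)) ^ 2 * (a * (a * b⁻¹)⁻¹) ^ 2 =
      (b ^ 3 * ((a ^ 2)⁻¹ * b * (a ^ 2)⁻¹ * b ^ 3)⁻¹ * (b ^ 3)⁻¹) *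
        (a * (a⁻¹ * b ^ 2 * a * b ^ 2) * a⁻¹) := by
  simp [pow_succ, mul_assoc]

theorem rels_iff {G : Type*} [Group G] (a b : G) :
    ((a * (a * b⁻¹)) ^ 2 * (a * (a * b⁻¹)⁻¹) ^ 2 = 1 ∧
      ((a * b⁻¹) * a) ^ 2 * ((a * b⁻¹) * a⁻¹) ^ 2 = 1) ↔
    (a⁻¹ * b ^ 2 * a * b ^ 2 = 1 ∧ (a ^ 2)⁻¹ * b * (a ^ 2)⁻¹ * b ^ 3 = 1) := by
  rw [rel_one, rel_two]
  generalize (a ^ 2)⁻¹ * b * (a ^ 2)⁻¹ * b ^ 3 = q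
  generalize a⁻¹ * b ^ 2 * a * b ^ 2 = p
  constructor
  · rintro ⟨h1, h2⟩
    rw [conj_eq_one_iff, inv_eq_one] at h2
    subst h2
    simp only [inv_one, mul_one, mul_inv_cancel, one_mul, conj_eq_one_iff] at h1
    exact ⟨h1, rfl⟩
  · rintro ⟨rfl, rfl⟩
    simp

theorem S_rels : (sx * sy) ^ 2 * (sx * sy⁻¹) ^ 2 = 1 ∧ (sy * sx) ^ 2 * (sy * sx⁻¹) ^ 2 = 1 :=
  ⟨PresentedGroup.one_of_mem (rels := Srels) (Or.inl rfl),
    PresentedGroup.one_of_mem (rels := Srels) (Or.inr rfl)⟩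

theorem Q_rels : qa⁻¹ * qb ^ 2 * qa * qb ^ 2 = 1 ∧
    (qa ^ 2)⁻¹ * qb * (qa ^ 2)⁻¹ * qb ^ 3 = 1 :=
  ⟨PresentedGroup.one_of_mem (rels := Qrels) (Or.inl rfl),
    PresentedGroup.one_of_mem (rels := Qrels) (Or.inr rfl)⟩

theorem fwd_rels : ∀ r ∈ Srels, FreeGroup.lift ![qa, qa * qb⁻¹] r = 1 := by
  have h := (rels_iff qa qb).2 Q_rels
  rintro r (rfl | rfl)
  · simpa using h.1
  · simpa using h.2

theorem bwd_rels : ∀ r ∈ Qrels, FreeGroup.lift ![sx, sy⁻¹ * sx] r = 1 := by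
  have e : sx * (sy⁻¹ * sx)⁻¹ = sy := by group
  have h := (rels_iff sx (sy⁻¹ * sx)).1 (by rw [e]; exact S_rels)
  rintro r (rfl | rfl)
  · simp only [map_mul, map_inv, map_pow, FreeGroup.lift_apply_of]
    exact h.1
  · simp only [map_mul, map_inv, map_pow, FreeGroup.lift_apply_of]
    exact h.2

def fwd : S →* Q := PresentedGroup.toGroup fwd_rels
def bwd : Q →* S := PresentedGroup.toGroup bwd_rels

theorem fwd_x : fwd sx = qa := PresentedGroup.toGroup.of fwd_rels
theorem fwd_y : fwd sy = qa * qb⁻¹ := PresentedGroup.toGroup.of fwd_rels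
theorem bwd_a : bwd qa = sx := PresentedGroup.toGroup.of bwd_rels
theorem bwd_b : bwd qb = sy⁻¹ * sx := PresentedGroup.toGroup.of bwd_rels

/-- `S` is isomorphic to `⟨a, b | a⁻¹b²ab², a⁻²ba⁻²b³⟩` via `x ↦ a`, `y ↦ ab⁻¹`. -/
theorem S_iso_Q : ∃ e : S ≃* Q, e sx = qa ∧ e sy = qa * qb⁻¹ := by
  refine ⟨MonoidHom.toMulEquiv fwd bwd ?_ ?_, fwd_x, fwd_y⟩
  · apply PresentedGroup.ext
    intro i
    fin_cases i
    · change bwd (fwd sx) = sx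
      rw [fwd_x, bwd_a]
    · change bwd (fwd sy) = sy
      rw [fwd_y, map_mul, map_inv, bwd_a, bwd_b]
      group
  · apply PresentedGroup.ext
    intro i
    fin_cases i
    · change fwd (bwd qa) = qa
      rw [bwd_a, fwd_x]
    · change fwd (bwd qb) = qb
      rw [bwd_b, map_mul, map_inv, fwd_x, fwd_y]
      group
end
end
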